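/- arXiv:1201.5253 — 5 statements merged into one kernel-verified Lean document; each statement's English description precedes it below -/
import Mathlib

section
/- For every positive integer n, the Pfaffian of the 2n×2n skew-symmetric matrix whose (i,j) entry is (j−i)·M_{i+j−3} for 1 ≤ i,j ≤ 2n (with the convention that the (1,1) entry, whose factor j−i vanishes, is 0) equals ∏_{k=0}^{n−1} (4k+1). -/
/-- The Pfaffian of a `2N × 2N` matrix, defined as the sum over all partitions of
the index set into two-element blocks (encoded as permutations `σ` with
`σ(2i) < σ(2i+1)` and `σ(0) < σ(2) < … < σ(2N-2)`, one for each partition) of the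
sign of `σ` times the product `∏ i, A (σ (2i)) (σ (2i+1))`. -/
def pfaffian {R : Type*} [CommRing R] {N : ℕ}
    (A : Matrix (Fin (2 * N)) (Fin (2 * N)) R) : R :=
  ∑ σ ∈ Finset.univ.filter (fun σ : Equiv.Perm (Fin (2 * N)) =>
      (∀ i : Fin N, σ ⟨2 * i.val, by have := i.isLt; omega⟩
          < σ ⟨2 * i.val + 1, by have := i.isLt; omega⟩) ∧
      (∀ i j : Fin N, i < j → σ ⟨2 * i.val, by have := i.isLt; omega⟩
          < σ ⟨2 * j.val, by have := j.isLt; omega⟩)),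
    (Equiv.Perm.sign σ : ℤ) •
      ∏ i : Fin N, A (σ ⟨2 * i.val, by have := i.isLt; omega⟩)
        (σ ⟨2 * i.val + 1, by have := i.isLt; omega⟩)

/-- The `n`-th Motzkin number `M_n = ∑_{k=0}^{n} (1/(k+1))·C(n,2k)·C(2k,k)`. -/
def motzkin (n : ℕ) : ℚ :=
  ∑ k ∈ Finset.range (n + 1), (1 / ((k : ℚ) + 1)) * (n.choose (2 * k)) * ((2 * k).choose k)

def triS (n l : ℕ) : ℚ :=
  ∑ k ∈ Finset.range (n + 1), (n.choose (2 * k + l) : ℚ) * ((2 * k + l).choose k)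

lemma triS_eq (n l K : ℕ) (h : n + 1 ≤ K) :
    triS n l = ∑ k ∈ Finset.range K, (n.choose (2 * k + l) : ℚ) * ((2 * k + l).choose k) := by
  unfold triS
  apply Finset.sum_subset
  · intro x; simp only [Finset.mem_range]; omega
  · intro x _ hx
    simp only [Finset.mem_range, not_lt] at hx
    rw [Nat.choose_eq_zero_of_lt (by omega)]; simp

lemma triS_zero_of_lt (n l : ℕ) (h : n < l) : triS n l = 0 := by
  unfold triS
  apply Finset.sum_eq_zero
  intro x _
  rw [Nat.choose_eq_zero_of_lt (by omega)]; simp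

lemma triS_self (n : ℕ) : triS n n = 1 := by
  unfold triS
  rw [Finset.sum_eq_single 0]
  · simp
  · intro b _ hb
    rw [Nat.choose_eq_zero_of_lt (by omega)]; simp
  · simp

lemma triS_succ_succ (n l : ℕ) :
    triS (n + 1) (l + 1) = triS n l + triS n (l + 1) + triS n (l + 2) := by
  rw [triS_eq (n + 1) (l + 1) (n + 3) (by omega), triS_eq n l (n + 3) (by omega),
    triS_eq n (l + 1) (n + 3) (by omega), triS_eq n (l + 2) (n + 2) (by omega)]
  have e1 : ∀ k, ((n + 1).choose (2 * k + (l + 1)) : ℚ) * ((2 * k + (l + 1)).choose k)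
      = (n.choose (2 * k + (l + 1)) : ℚ) * ((2 * k + (l + 1)).choose k)
       + (n.choose (2 * k + l) : ℚ) * ((2 * k + (l + 1)).choose k) := by
    intro k
    rw [← add_assoc, Nat.choose_succ_succ]; push_cast; ring
  rw [Finset.sum_congr rfl (fun k _ => e1 k), Finset.sum_add_distrib]
  have e2 : ∑ k ∈ Finset.range (n + 3), (n.choose (2 * k + l) : ℚ) * ((2 * k + (l + 1)).choose k)
    = ∑ k ∈ Finset.range (n + 3), (n.choose (2 * k + l) : ℚ) * ((2 * k + l).choose k) +
      ∑ k ∈ Finset.range (n + 2), (n.choose (2 * k + (l + 2)) : ℚ) * ((2 * k + (l + 2)).choose k) := by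
    rw [Finset.sum_range_succ' _ (n + 2), Finset.sum_range_succ' _ (n + 2)]
    have : ∀ k, (n.choose (2 * (k + 1) + l) : ℚ) * ((2 * (k + 1) + (l + 1)).choose (k + 1))
       = (n.choose (2 * (k + 1) + l) : ℚ) * ((2 * (k + 1) + l).choose (k + 1))
        + (n.choose (2 * k + (l + 2)) : ℚ) * ((2 * k + (l + 2)).choose k) := by
      intro k
      rw [← add_assoc (2 * (k + 1)), Nat.choose_succ_succ,
        show 2 * (k + 1) + l = 2 * k + (l + 2) by ring]; push_cast; ring
    rw [Finset.sum_congr rfl (fun k _ => this k), Finset.sum_add_distrib]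
    simp; ring
  rw [e2]; ring

lemma triS_succ_zero (n : ℕ) :
    triS (n + 1) 0 = triS n 0 + 2 * triS n 1 := by
  rw [triS_eq (n + 1) 0 (n + 3) (by omega), triS_eq n 0 (n + 3) (by omega),
    triS_eq n 1 (n + 2) (by omega)]
  rw [Finset.sum_range_succ' _ (n + 2), Finset.sum_range_succ' _ (n + 2)]
  have : ∀ k, ((n + 1).choose (2 * (k + 1) + 0) : ℚ) * ((2 * (k + 1) + 0).choose (k + 1))
       = (n.choose (2 * (k + 1) + 0) : ℚ) * ((2 * (k + 1) + 0).choose (k + 1))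
        + 2 * ((n.choose (2 * k + 1) : ℚ) * ((2 * k + 1).choose k)) := by
    intro k
    rw [show 2 * (k + 1) + 0 = (2 * k + 1) + 1 by ring, Nat.choose_succ_succ n,
      Nat.choose_succ_succ (2 * k + 1) k]
    have : (2 * k + 1).choose (k + 1) = (2 * k + 1).choose k := Nat.choose_symm_half k
    rw [Nat.succ_eq_add_one, this]; push_cast; ring
  rw [Finset.sum_congr rfl (fun k _ => this k), Finset.sum_add_distrib, ← Finset.mul_sum]
  simp; ring

lemma choose_aux (k : ℕ) : ((2 * k + 2).choose k : ℚ)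
    = ((2 * k + 2).choose (k + 1) : ℚ) - 1 / ((k : ℚ) + 2) * ((2 * k + 2).choose (k + 1)) := by
  have h := Nat.choose_succ_right_eq (2 * k + 2) k
  rw [show 2 * k + 2 - k = k + 2 by omega] at h
  have h' : ((2 * k + 2).choose (k + 1) : ℚ) * (k + 1) = (2 * k + 2).choose k * (k + 2) := by
    exact_mod_cast h
  have : (k : ℚ) + 2 ≠ 0 := by positivity
  field_simp
  linarith

lemma triS_motzkin (n : ℕ) : triS n 0 - triS n 2 = motzkin n := by
  rw [triS_eq n 0 (n + 2) (by omega), triS_eq n 2 (n + 1) (by omega)]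
  have : motzkin n = ∑ k ∈ Finset.range (n + 2),
      (1 / ((k : ℚ) + 1)) * (n.choose (2 * k)) * ((2 * k).choose k) := by
    rw [Finset.sum_range_succ, Nat.choose_eq_zero_of_lt (show n < 2 * (n + 1) by omega)]
    simp [motzkin]
  rw [this, Finset.sum_range_succ' _ (n + 1), Finset.sum_range_succ' _ (n + 1),
    add_sub_right_comm, ← Finset.sum_sub_distrib]
  congr 1
  · apply Finset.sum_congr rfl
    intro k _
    rw [choose_aux, show 2 * (k + 1) + 0 = 2 * k + 2 by ring, show 2 * (k + 1) = 2 * k + 2 by ring]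
    push_cast
    rw [show (k : ℚ) + 1 + 1 = k + 2 by ring]
    ring
  · simp

lemma triS_one (n : ℕ) : triS (n + 1) 1 = (n + 1) * motzkin n := by
  have hv : motzkin n = ∑ k ∈ Finset.range (n + 2),
      (1 / ((k : ℚ) + 1)) * (n.choose (2 * k)) * ((2 * k).choose k) := by
    rw [Finset.sum_range_succ, Nat.choose_eq_zero_of_lt (show n < 2 * (n + 1) by omega)]
    simp [motzkin]
  rw [hv, triS, Finset.mul_sum]
  apply Finset.sum_congr rfl
  intro k _
  have h1 := Nat.add_one_mul_choose_eq n (2 * k)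
  have h2 := Nat.add_one_mul_choose_eq (2 * k) k
  have h3 : (2 * k + 1).choose (k + 1) = (2 * k + 1).choose k := Nat.choose_symm_half k
  rw [h3] at h2
  have h1' : ((n : ℚ) + 1) * n.choose (2 * k) = (n + 1).choose (2 * k + 1) * (2 * k + 1) := by
    exact_mod_cast h1
  have h2' : (2 * (k : ℚ) + 1) * (2 * k).choose k = (2 * k + 1).choose k * (k + 1) := by
    exact_mod_cast h2
  have : (k : ℚ) + 1 ≠ 0 := by positivity
  have : 2 * (k : ℚ) + 1 ≠ 0 := by positivity
  have h4 : ((2 * k + 1).choose k : ℚ) = (2 * (k : ℚ) + 1) * (2 * k).choose k / (k + 1) := by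
    rw [h2']; field_simp
  rw [h4]
  calc _ = ((n + 1).choose (2 * k + 1) * (2 * k + 1)) * ((2 * k).choose k : ℚ) / (k + 1) := by ring
    _ = _ := by rw [← h1']; ring

def triP (n l : ℕ) : ℚ := triS n l - triS n (l + 2)

lemma triP_zero (n : ℕ) : triP n 0 = motzkin n := triS_motzkin n

lemma triP_succ_zero (n : ℕ) : triP (n + 1) 0 = triP n 0 + triP n 1 := by
  simp only [triP, triS_succ_zero, triS_succ_succ]; ring

lemma triP_succ_succ (n l : ℕ) :
    triP (n + 1) (l + 1) = triP n l + triP n (l + 1) + triP n (l + 2) := by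
  simp only [triP, triS_succ_succ, show l + 1 + 2 = (l + 2) + 1 by ring]; ring

lemma triP_of_lt (n l : ℕ) (h : n < l) : triP n l = 0 := by
  simp [triP, triS_zero_of_lt n l h, triS_zero_of_lt n (l + 2) (by omega)]

lemma triP_shift (i j K : ℕ) :
    ∑ l ∈ Finset.range (K + 1), triP (i + 1) l * triP j l
      - ∑ l ∈ Finset.range (K + 1), triP i l * triP (j + 1) l
    = triP i (K + 1) * triP j K - triP i K * triP j (K + 1) := by
  induction K with
  | zero => simp [triP_succ_zero]; ring
  | succ K ih =>
    rw [Finset.sum_range_succ, Finset.sum_range_succ _ (K + 1), triP_succ_succ, triP_succ_succ]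
    linear_combination ih

lemma triP_sum (i : ℕ) : ∀ j K, i + j < K →
    ∑ l ∈ Finset.range (K + 1), triP i l * triP j l = motzkin (i + j) := by
  induction i with
  | zero =>
    intro j K h
    rw [Finset.sum_eq_single 0]
    · rw [triP_zero, triP_zero]; simp [motzkin]
    · intro b _ hb
      rw [triP_of_lt 0 b (by omega)]; simp
    · simp
  | succ i ih =>
    intro j K h
    have := triP_shift i j K
    rw [triP_of_lt i _ (by omega), triP_of_lt i K (by omega), ih (j + 1) K (by omega)] at this
    rw [show i + 1 + j = i + (j + 1) by ring]
    linarith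

lemma triS_shift (i j K : ℕ) :
    ∑ l ∈ Finset.range (K + 1), (2 * (l : ℚ) + 1) *
        (triS (i + 1) l * triS j (l + 1) - triS (i + 1) (l + 1) * triS j l)
      - ∑ l ∈ Finset.range (K + 1), (2 * (l : ℚ) + 1) *
        (triS i l * triS (j + 1) (l + 1) - triS i (l + 1) * triS (j + 1) l)
      + 2 * ∑ l ∈ Finset.range (K + 1), triP i l * triP j l =
      -(2 * K + 3) * (triS i K * triS j (K + 2) + triS i (K + 2) * triS j K)
      + 2 * triS i (K + 2) * triS j (K + 2) + (4 * K + 4) * triS i (K + 1) * triS j (K + 1) := by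
  induction K with
  | zero => simp [triS_succ_zero, triS_succ_succ, triP]; ring
  | succ K ih =>
    rw [Finset.sum_range_succ, Finset.sum_range_succ _ (K + 1), Finset.sum_range_succ _ (K + 1),
      triS_succ_succ i K, triS_succ_succ i (K + 1), triS_succ_succ j K, triS_succ_succ j (K + 1),
      triP, triP]
    simp only [show K + 1 + 1 = K + 2 by ring, show K + 1 + 2 = K + 3 by ring]
    push_cast
    linear_combination ih

lemma triS_sum (i : ℕ) : ∀ j K, i + j < K →
    ∑ l ∈ Finset.range (K + 1), (2 * (l : ℚ) + 1) *
        (triS i l * triS j (l + 1) - triS i (l + 1) * triS j l)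
      = ((j : ℚ) - i) * motzkin (i + j - 1) := by
  induction i with
  | zero =>
    intro j K h
    rw [Finset.sum_eq_single 0]
    · rw [triS_self, triS_zero_of_lt 0 (0 + 1) (by omega)]
      cases j with
      | zero => rw [triS_zero_of_lt 0 (0 + 1) (by omega)]; simp
      | succ j => rw [triS_one]; simp
    · intro b _ hb
      rw [triS_zero_of_lt 0 b (by omega), triS_zero_of_lt 0 (b + 1) (by omega)]; simp
    · simp
  | succ i ih =>
    intro j K h
    have := triS_shift i j K
    rw [triS_zero_of_lt i K (by omega), triS_zero_of_lt i (K + 1) (by omega),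
      triS_zero_of_lt i (K + 2) (by omega), ih (j + 1) K (by omega),
      triP_sum i j K (by omega)] at this
    rw [show i + 1 + j - 1 = i + j by omega]
    rw [show i + (j + 1) - 1 = i + j by omega] at this
    push_cast at this ⊢
    linarith

def triB (l m : ℕ) : ℚ :=
  (if m = l + 1 then 2 * (l : ℚ) + 1 else 0) - (if l = m + 1 then 2 * (m : ℚ) + 1 else 0)

lemma sum_half (M : ℕ) (a b : ℕ → ℚ) (hb : b M = 0) :
    ∑ l ∈ Finset.range M, ∑ m ∈ Finset.range M,
      a l * (if m = l + 1 then 2 * (l : ℚ) + 1 else 0) * b m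
    = ∑ l ∈ Finset.range M, (2 * (l : ℚ) + 1) * (a l * b (l + 1)) := by
  apply Finset.sum_congr rfl
  intro l hl
  rw [Finset.sum_eq_single (l + 1)]
  · simp; ring
  · intro m _ hm; simp [hm]
  · intro h
    simp only [Finset.mem_range, not_lt] at h hl
    have : l + 1 = M := by omega
    rw [this, hb]; simp

lemma triS_mat (M i j : ℕ) (hi : i < M) (hj : j < M) :
    ∑ l ∈ Finset.range M, ∑ m ∈ Finset.range M, triS i l * triB l m * triS j m
      = ((j : ℚ) - i) * motzkin (i + j - 1) := by
  rw [← triS_sum i j (i + j + M) (by omega)]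
  have h1 := sum_half M (triS i) (triS j) (triS_zero_of_lt _ _ hj)
  have h2 := sum_half M (triS j) (triS i) (triS_zero_of_lt _ _ hi)
  rw [Finset.sum_comm] at h2
  have h3 : ∑ l ∈ Finset.range (i + j + M + 1), (2 * (l : ℚ) + 1) *
        (triS i l * triS j (l + 1) - triS i (l + 1) * triS j l) =
      ∑ l ∈ Finset.range M, (2 * (l : ℚ) + 1) *
        (triS i l * triS j (l + 1) - triS i (l + 1) * triS j l) := by
    symm
    apply Finset.sum_subset
    · intro x; simp only [Finset.mem_range]; omega
    · intro x _ hx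
      simp only [Finset.mem_range, not_lt] at hx
      rw [triS_zero_of_lt i x (by omega), triS_zero_of_lt j x (by omega)]; simp
  rw [h3]
  have h4 : ∑ l ∈ Finset.range M, (2 * (l : ℚ) + 1) *
        (triS i l * triS j (l + 1) - triS i (l + 1) * triS j l) =
      ∑ l ∈ Finset.range M, (2 * (l : ℚ) + 1) * (triS i l * triS j (l + 1))
      - ∑ l ∈ Finset.range M, (2 * (l : ℚ) + 1) * (triS j l * triS i (l + 1)) := by
    rw [← Finset.sum_sub_distrib]
    apply Finset.sum_congr rfl; intro l _; ring
  rw [h4, ← h1, ← h2, ← Finset.sum_sub_distrib]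
  apply Finset.sum_congr rfl; intro l _
  rw [← Finset.sum_sub_distrib]
  apply Finset.sum_congr rfl; intro m _
  rw [triB]; ring

def pE (N : ℕ) : Fin N × Fin 2 ≃ Fin (2 * N) :=
  finProdFinEquiv.trans (finCongr (mul_comm N 2))

lemma pE_zero {N : ℕ} (i : Fin N) : pE N (i, 0) = ⟨2 * i.val, by have := i.isLt; omega⟩ := by
  ext; simp [pE]

lemma pE_one {N : ℕ} (i : Fin N) : pE N (i, 1) = ⟨2 * i.val + 1, by have := i.isLt; omega⟩ := by
  ext; simp [pE]; omega

def pNorm {N : ℕ} (σ : Equiv.Perm (Fin (2 * N))) : Prop :=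
  (∀ i : Fin N, σ (pE N (i, 0)) < σ (pE N (i, 1))) ∧
  (∀ i j : Fin N, i < j → σ (pE N (i, 0)) < σ (pE N (j, 0)))

def pTerm {N : ℕ} (A : Matrix (Fin (2 * N)) (Fin (2 * N)) ℚ) (σ : Equiv.Perm (Fin (2 * N))) : ℚ :=
  ((Equiv.Perm.sign σ : ℤ) : ℚ) * ∏ i : Fin N, A (σ (pE N (i, 0))) (σ (pE N (i, 1)))

open Classical in
lemma pfaffian_eq {N : ℕ} (A : Matrix (Fin (2 * N)) (Fin (2 * N)) ℚ) :
    pfaffian A = ∑ σ ∈ Finset.univ.filter (fun σ => pNorm σ), pTerm A σ := by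
  unfold pfaffian
  apply Finset.sum_congr
  · ext σ
    simp only [Finset.mem_filter, Finset.mem_univ, true_and, pNorm, pE_zero, pE_one]
  · intro σ _
    simp only [pTerm, pE_zero, pE_one, zsmul_eq_mul]

def pFull {N : ℕ} (A : Matrix (Fin (2 * N)) (Fin (2 * N)) ℚ) : ℚ := ∑ σ, pTerm A σ

def pH {N : ℕ} (h : Equiv.Perm (Fin N) × (Fin N → Equiv.Perm (Fin 2))) :
    Equiv.Perm (Fin (2 * N)) :=
  (pE N).permCongr ((Equiv.prodCongrRight h.2).trans (Equiv.prodCongrLeft fun _ => h.1))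

lemma pH_apply {N : ℕ} (h : Equiv.Perm (Fin N) × (Fin N → Equiv.Perm (Fin 2))) (i : Fin N)
    (b : Fin 2) : pH h (pE N (i, b)) = pE N (h.1 i, h.2 i b) := by
  simp [pH, Equiv.permCongr_apply]

lemma pH_sign {N : ℕ} (h : Equiv.Perm (Fin N) × (Fin N → Equiv.Perm (Fin 2))) :
    Equiv.Perm.sign (pH h) = ∏ i, Equiv.Perm.sign (h.2 i) := by
  rw [pH, Equiv.Perm.sign_permCongr, Equiv.Perm.sign_trans, Equiv.Perm.sign_prodCongrRight,
    Equiv.Perm.sign_prodCongrLeft]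
  simp

lemma perm_two (e : Equiv.Perm (Fin 2)) : e = 1 ∨ e = Equiv.swap 0 1 := by
  revert e; decide

lemma pTerm_mul {N : ℕ} (A : Matrix (Fin (2 * N)) (Fin (2 * N)) ℚ) (hA : ∀ i j, A i j = - A j i)
    (σ : Equiv.Perm (Fin (2 * N))) (h : Equiv.Perm (Fin N) × (Fin N → Equiv.Perm (Fin 2))) :
    pTerm A (σ * pH h) = pTerm A σ := by
  unfold pTerm
  rw [Equiv.Perm.sign_mul, pH_sign]
  simp only [Equiv.Perm.mul_apply, pH_apply]
  push_cast
  rw [mul_assoc, ← Finset.prod_mul_distrib]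
  congr 1
  rw [← Equiv.prod_comp h.1 (fun i => A (σ (pE N (i, 0))) (σ (pE N (i, 1))))]
  apply Finset.prod_congr rfl
  intro i _
  rcases perm_two (h.2 i) with e | e
  · rw [e]; simp
  · rw [e, hA (σ (pE N (h.1 i, 0)))]; simp

lemma pNorm_unique {N : ℕ} (σ : Equiv.Perm (Fin (2 * N)))
    (h : Equiv.Perm (Fin N) × (Fin N → Equiv.Perm (Fin 2))) (h1 : pNorm σ)
    (h2 : ∀ i, σ (pE N (h.1 i, h.2 i 0)) < σ (pE N (h.1 i, h.2 i 1)))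
    (h3 : ∀ i j, i < j → σ (pE N (h.1 i, h.2 i 0)) < σ (pE N (h.1 j, h.2 j 0))) : h = 1 := by
  have e2 : ∀ i, h.2 i = 1 := by
    intro i
    rcases perm_two (h.2 i) with e | e
    · exact e
    · have := h2 i
      rw [e] at this
      simp only [Equiv.swap_apply_left, Equiv.swap_apply_right] at this
      exact absurd this (not_lt.2 (h1.1 _).le)
  have hs : StrictMono h.1 := by
    intro i j hij
    by_contra hc
    have hne : h.1 j ≠ h.1 i := fun e => hij.ne' (h.1.injective e)
    have hlt : h.1 j < h.1 i := lt_of_le_of_ne (not_lt.1 hc) hne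
    have := h3 i j hij
    rw [e2, e2] at this
    exact absurd this (not_lt.2 (h1.2 _ _ hlt).le)
  have e1 : h.1 = 1 := by
    have : (hs.orderIsoOfSurjective _ h.1.surjective) = OrderIso.refl _ := Subsingleton.elim _ _
    ext i
    have := congrArg (fun f => f i) this
    simpa using congrArg Fin.val this
  ext1
  · exact e1
  · funext i; exact e2 i

lemma pH_mul_inv {N : ℕ} (h k : Equiv.Perm (Fin N) × (Fin N → Equiv.Perm (Fin 2))) :
    ∃ g, pH g * pH k = pH h ∧ (g = 1 → h = k) := by
  refine ⟨(h.1 * k.1⁻¹, fun i => h.2 (k.1⁻¹ i) * (k.2 (k.1⁻¹ i))⁻¹), ?_, ?_⟩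
  · apply Equiv.ext
    intro x
    obtain ⟨⟨i, b⟩, rfl⟩ := (pE N).surjective x
    rw [Equiv.Perm.mul_apply, pH_apply, pH_apply, pH_apply]
    simp
  · intro hg
    rw [Prod.ext_iff] at hg
    obtain ⟨e1, e2⟩ := hg
    simp only [Prod.fst_one, Prod.snd_one] at e1 e2
    have e1' := mul_inv_eq_one.1 e1
    ext1
    · exact e1'
    · funext i
      have := congrFun e2 (k.1 i)
      have hk : k.1⁻¹ (k.1 i) = i := by simp
      simp only [hk, Pi.one_apply] at this
      exact mul_inv_eq_one.1 this

lemma pNorm_exists {N : ℕ} (σ : Equiv.Perm (Fin (2 * N))) :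
    ∃ (h : Equiv.Perm (Fin N) × (Fin N → Equiv.Perm (Fin 2))), pNorm (σ * pH h) := by
  let f : Fin N → Equiv.Perm (Fin 2) := fun i =>
    if σ (pE N (i, 0)) < σ (pE N (i, 1)) then 1 else Equiv.swap 0 1
  have hf : ∀ i, σ (pE N (i, f i 0)) < σ (pE N (i, f i 1)) := by
    intro i
    by_cases hc : σ (pE N (i, 0)) < σ (pE N (i, 1))
    · simp [f, hc]
    · simp only [f, hc, if_false, Equiv.swap_apply_left, Equiv.swap_apply_right]
      refine lt_of_le_of_ne (not_lt.1 hc) ?_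
      intro e
      have := (pE N).injective (σ.injective e)
      simp at this
  let g : Fin N → Fin (2 * N) := fun i => σ (pE N (i, f i 0))
  have hg : Function.Injective g := by
    intro i j e
    have := (pE N).injective (σ.injective e)
    exact (Prod.ext_iff.1 this).1
  refine ⟨(Tuple.sort g, fun i => f (Tuple.sort g i)), ?_, ?_⟩
  · intro i
    rw [Equiv.Perm.mul_apply, Equiv.Perm.mul_apply, pH_apply, pH_apply]
    exact hf _
  · intro i j hij
    rw [Equiv.Perm.mul_apply, Equiv.Perm.mul_apply, pH_apply, pH_apply]
    have hm : StrictMono (g ∘ Tuple.sort g) :=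
      (Tuple.monotone_sort g).strictMono_of_injective (hg.comp (Tuple.sort g).injective)
    exact hm hij

lemma pH_one {N : ℕ} : pH (N := N) 1 = 1 := by
  apply Equiv.ext
  intro x
  obtain ⟨⟨i, b⟩, rfl⟩ := (pE N).surjective x
  rw [pH_apply]; simp

lemma pFull_eq {N : ℕ} (A : Matrix (Fin (2 * N)) (Fin (2 * N)) ℚ) (hA : ∀ i j, A i j = - A j i) :
    pFull A = (Fintype.card (Equiv.Perm (Fin N) × (Fin N → Equiv.Perm (Fin 2))) : ℚ)
      * pfaffian A := by
  classical
  rw [pfaffian_eq, pFull, Finset.mul_sum]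
  have : ∑ σ, pTerm A σ = ∑ p ∈ (Finset.univ.filter (fun σ : Equiv.Perm (Fin (2 * N)) => pNorm σ))
      ×ˢ (Finset.univ : Finset (Equiv.Perm (Fin N) × (Fin N → Equiv.Perm (Fin 2)))),
      pTerm A p.1 := by
    symm
    refine Finset.sum_bij (fun p _ => p.1 * pH p.2) (by simp) ?_ ?_ ?_
    · rintro ⟨s, h⟩ hs ⟨t, k⟩ ht e
      simp only [Finset.mem_product, Finset.mem_filter, Finset.mem_univ, true_and, and_true]
        at hs ht e
      obtain ⟨g, hg, hg1⟩ := pH_mul_inv h k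
      have e' : s * pH g = t := by
        rw [← hg, ← mul_assoc] at e
        exact mul_right_cancel e
      have : g = 1 := by
        apply pNorm_unique s g hs
        · intro i
          have := ht.1 i
          rwa [← e', Equiv.Perm.mul_apply, Equiv.Perm.mul_apply, pH_apply, pH_apply] at this
        · intro i j hij
          have := ht.2 i j hij
          rwa [← e', Equiv.Perm.mul_apply, Equiv.Perm.mul_apply, pH_apply, pH_apply] at this
      have hk := hg1 this
      rw [this, pH_one, mul_one] at e'
      rw [e', hk]
    · intro σ _
      obtain ⟨h, hh⟩ := pNorm_exists σ
      obtain ⟨g, hg, -⟩ := pH_mul_inv 1 h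
      have hc : pH g = (pH h)⁻¹ := by
        rw [pH_one] at hg
        exact eq_inv_of_mul_eq_one_left hg
      exact ⟨(σ * pH h, g), by simpa using hh, by simp [hc]⟩
    · rintro ⟨s, h⟩ _
      exact (pTerm_mul A hA s h).symm
  rw [this, Finset.sum_product]
  simp

lemma prod_expand {N : ℕ} (S B : Matrix (Fin (2 * N)) (Fin (2 * N)) ℚ)
    (σ : Equiv.Perm (Fin (2 * N))) :
    ∏ i : Fin N, (S * B * S.transpose) (σ (pE N (i, 0))) (σ (pE N (i, 1)))
    = ∑ g : Fin (2 * N) → Fin (2 * N), (∏ i : Fin N, B (g (pE N (i, 0))) (g (pE N (i, 1))))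
        * ∏ j, S (σ j) (g j) := by
  have h1 : ∀ a b, (S * B * S.transpose) a b
      = ∑ p : Fin 2 → Fin (2 * N), B (p 0) (p 1) * (S a (p 0) * S b (p 1)) := by
    intro a b
    rw [← (finTwoArrowEquiv (Fin (2 * N))).symm.sum_comp, Fintype.sum_prod_type,
      Finset.sum_comm]
    simp only [Matrix.mul_apply, Finset.sum_mul, Matrix.transpose_apply]
    apply Finset.sum_congr rfl; intro y _
    apply Finset.sum_congr rfl; intro x _
    simp; ring
  simp only [h1]
  rw [Fintype.prod_sum]
  let e : (Fin (2 * N) → Fin (2 * N)) ≃ (Fin N → Fin 2 → Fin (2 * N)) :=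
    ((pE N).symm.arrowCongr (Equiv.refl _)).trans (Equiv.curry _ _ _)
  rw [← e.sum_comp]
  apply Finset.sum_congr rfl
  intro g _
  rw [Finset.prod_mul_distrib, ← (pE N).prod_comp, Fintype.prod_prod_type]
  simp [e, Equiv.arrowCongr, Fin.prod_univ_two]

lemma pFull_conj {N : ℕ} (S B : Matrix (Fin (2 * N)) (Fin (2 * N)) ℚ) :
    pFull (S * B * S.transpose) = S.det * pFull B := by
  classical
  simp only [pFull, pTerm, prod_expand, Finset.mul_sum]
  rw [Finset.sum_comm]
  have h1 : ∀ g : Fin (2 * N) → Fin (2 * N),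
      ∑ σ : Equiv.Perm (Fin (2 * N)), ((Equiv.Perm.sign σ : ℤ) : ℚ) *
        ((∏ i : Fin N, B (g (pE N (i, 0))) (g (pE N (i, 1)))) * ∏ j, S (σ j) (g j))
      = (∏ i : Fin N, B (g (pE N (i, 0))) (g (pE N (i, 1)))) * (S.submatrix id g).det := by
    intro g
    rw [Matrix.det_apply', Finset.mul_sum]
    apply Finset.sum_congr rfl
    intro σ _
    simp; ring
  rw [Finset.sum_congr rfl (fun g _ => h1 g)]
  symm
  apply Finset.sum_of_injOn (fun σ : Equiv.Perm (Fin (2 * N)) => (σ : Fin (2 * N) → Fin (2 * N)))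
  · intro a _ b _ h; exact DFunLike.coe_injective h
  · intro a _; simp
  · intro g _ hg
    have : ¬ Function.Injective g := by
      intro hi
      apply hg
      exact ⟨Equiv.ofBijective g (Finite.injective_iff_bijective.1 hi), by simp, rfl⟩
    simp only [Function.Injective, not_forall] at this
    obtain ⟨i, j, hij, hne⟩ := this
    rw [Matrix.det_zero_of_column_eq hne (fun k => by simp [hij]), mul_zero]
  · intro σ _
    rw [Matrix.det_permute']
    ring

lemma pfaffian_conj {N : ℕ} (S B : Matrix (Fin (2 * N)) (Fin (2 * N)) ℚ)
    (hB : ∀ i j, B i j = - B j i) :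
    pfaffian (S * B * S.transpose) = S.det * pfaffian B := by
  have hA : ∀ i j, (S * B * S.transpose) i j = - (S * B * S.transpose) j i := by
    have hB' : B.transpose = -B := by
      ext i j; simp [hB j i]
    have : (S * B * S.transpose).transpose = - (S * B * S.transpose) := by
      rw [Matrix.transpose_mul, Matrix.transpose_mul, hB', Matrix.transpose_transpose,
        Matrix.mul_assoc]
      simp
    intro i j
    have := congrFun (congrFun this j) i
    simpa using this
  have h1 := pFull_eq _ hA
  have h2 := pFull_eq _ hB
  rw [pFull_conj, h2] at h1
  have hc : (Fintype.card (Equiv.Perm (Fin N) × (Fin N → Equiv.Perm (Fin 2))) : ℚ) ≠ 0 := by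
    exact_mod_cast Fintype.card_ne_zero
  apply mul_left_cancel₀ hc
  rw [← h1]; ring

lemma pfaffian_tri {N : ℕ} (B : Matrix (Fin (2 * N)) (Fin (2 * N)) ℚ)
    (hB : ∀ i j : Fin (2 * N), i.val < j.val → j.val ≠ i.val + 1 → B i j = 0) :
    pfaffian B = ∏ i : Fin N, B (pE N (i, 0)) (pE N (i, 1)) := by
  classical
  rw [pfaffian_eq, Finset.sum_eq_single 1]
  · simp [pTerm]
  · intro σ hσ hne
    simp only [Finset.mem_filter, Finset.mem_univ, true_and] at hσ
    by_contra hz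
    apply hne
    have hadj : ∀ i : Fin N, (σ (pE N (i, 1))).val = (σ (pE N (i, 0))).val + 1 := by
      intro i
      by_contra hc
      apply hz
      rw [pTerm, Finset.prod_eq_zero (Finset.mem_univ i) (hB _ _ (hσ.1 i) hc), mul_zero]
    have hmono : StrictMono σ := by
      intro x y hxy
      obtain ⟨⟨i, b⟩, rfl⟩ := (pE N).surjective x
      obtain ⟨⟨j, c⟩, rfl⟩ := (pE N).surjective y
      have hi := hadj i
      have hj := hadj j
      rcases lt_trichotomy i j with hij | hij | hij
      · have h0 := hσ.2 i j hij
        have hne : σ (pE N (i, 1)) ≠ σ (pE N (j, 0)) := by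
          intro e
          have := (pE N).injective (σ.injective e)
          simp at this
        have hne' : (σ (pE N (i, 1))).val ≠ (σ (pE N (j, 0))).val := fun e => hne (Fin.ext e)
        rw [Fin.lt_def] at h0 ⊢
        fin_cases b <;> fin_cases c <;> simp only [Fin.zero_eta, Fin.mk_one] <;> omega
      · subst hij
        rw [Fin.lt_def] at hxy ⊢
        fin_cases b <;> fin_cases c <;> simp only [Fin.zero_eta, Fin.mk_one, pE_zero, pE_one] at * <;> omega
      · exfalso
        rw [Fin.lt_def] at hxy hij
        fin_cases b <;> fin_cases c <;> simp only [Fin.zero_eta, Fin.mk_one, pE_zero, pE_one] at * <;> omega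
    have : (hmono.orderIsoOfSurjective _ σ.surjective) = OrderIso.refl _ := Subsingleton.elim _ _
    ext i
    have := congrArg (fun f => f i) this
    simpa using congrArg Fin.val this
  · intro h
    exfalso; apply h
    simp only [Finset.mem_filter, Finset.mem_univ, true_and, pNorm, pE_zero, pE_one]
    constructor
    · intro i
      change 2 * i.val < 2 * i.val + 1
      omega
    · intro i j hij
      change 2 * i.val < 2 * j.val
      have : i.val < j.val := hij
      omega

/-- For every positive integer `n`, the Pfaffian of the `2n × 2n` skew-symmetric
matrix with entries `(j-i)·M_{i+j-3}` (1-based; here 0-based, so the entry at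
`(i,j)` is `(j-i)·M_{i+j-1}`, the `(0,0)` entry being `0`) equals
`∏_{k=0}^{n-1} (4k+1)`. -/
theorem pfaffian_motzkin (n : ℕ) (hn : 1 ≤ n) :
    pfaffian (N := n) (Matrix.of fun i j : Fin (2 * n) =>
        ((j.val : ℚ) - (i.val : ℚ)) * motzkin (i.val + j.val - 1)) =
      ∏ k ∈ Finset.range n, (4 * (k : ℚ) + 1) := by
  let S : Matrix (Fin (2 * n)) (Fin (2 * n)) ℚ := Matrix.of fun i l => triS i.val l.val
  let B : Matrix (Fin (2 * n)) (Fin (2 * n)) ℚ := Matrix.of fun l m => triB l.val m.val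
  have hA : (Matrix.of fun i j : Fin (2 * n) =>
        ((j.val : ℚ) - (i.val : ℚ)) * motzkin (i.val + j.val - 1)) = S * B * S.transpose := by
    ext i j
    rw [Matrix.of_apply, ← triS_mat (2 * n) i j i.isLt j.isLt, Finset.sum_comm]
    simp only [Matrix.mul_apply, Matrix.transpose_apply, S, B, Matrix.of_apply]
    rw [← Fin.sum_univ_eq_sum_range
      (fun m => ∑ l ∈ Finset.range (2 * n), triS i l * triB l m * triS j m)]
    apply Finset.sum_congr rfl
    intro m _
    rw [Finset.sum_mul, ← Fin.sum_univ_eq_sum_range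
      (fun l => triS i l * triB l m * triS j m)]
  have hS : S.det = 1 := by
    rw [Matrix.det_of_lowerTriangular S]
    · simp [S, triS_self]
    · intro i j hij
      exact triS_zero_of_lt _ _ hij
  rw [hA, pfaffian_conj S B, hS, one_mul, pfaffian_tri]
  · rw [← Fin.prod_univ_eq_prod_range (fun k => 4 * (k : ℚ) + 1)]
    apply Finset.prod_congr rfl
    intro i _
    simp only [pE_zero, pE_one, B, Matrix.of_apply, triB]
    rw [if_pos trivial, if_neg (by omega)]
    push_cast; ring
  · intro i j hij hne
    simp only [B, Matrix.of_apply, triB]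
    rw [if_neg hne, if_neg (by omega)]; simp
  · intro i j
    simp only [B, Matrix.of_apply, triB]; ring
end

section
/- For every positive integer n, the determinant of the 2n×2n matrix whose (i,j) entry is (j−i)·M_{i+j−3} for 1 ≤ i,j ≤ 2n (with the convention that the (1,1) entry, whose factor j−i vanishes, is 0) equals (∏_{k=0}^{n−1} (4k+1))². -/
theorem K_det (n : ℕ) : ∀ a : ℕ → ℚ,
    (Matrix.of fun i j : Fin (2 * n) =>
      if j.val = i.val + 1 then a i.val else if i.val = j.val + 1 then - a j.val else 0).det
      = (∏ k ∈ Finset.range n, a (2 * k)) ^ 2 := by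
  induction n with
  | zero => intro a; simp
  | succ n ih =>
    intro a
    have h := ih (fun k => a (k + 2))
    rw [show 2 * (n + 1) = 2 * n + 1 + 1 from rfl, Matrix.det_succ_row_zero,
      Finset.sum_eq_single (1 : Fin (2 * n + 1 + 1))]
    · rw [Matrix.det_succ_column_zero, Finset.sum_eq_single (0 : Fin (2 * n + 1))]
      · rw [Finset.prod_range_succ', mul_pow]
        rw [show (∏ k ∈ Finset.range n, a (2 * (k + 1))) = ∏ k ∈ Finset.range n, a (2 * k + 2) from rfl, ← h]
        rw [Matrix.submatrix_submatrix]
        simp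
        rw [← mul_assoc, ← pow_two, mul_comm]
        congr 2
        ext i j
        have : (Fin.succAbove (1 : Fin (2 * n + 1 + 1)) j.succ).val = j.val + 2 := by
          rw [Fin.succAbove_of_le_castSucc]
          · simp
          · simp [Fin.le_def]
        simp [this]
      · intro b _ hb
        have : b.val ≠ 0 := fun h => hb (Fin.ext h)
        simp [this]
      · simp
    · intro b _ hb
      have : b.val ≠ 1 := fun h => hb (Fin.ext (by simpa using h))
      simp [this]
    · simp

open Polynomial LaurentPolynomial

/-- constant term functional -/
noncomputable def ctm : ℚ[T;T⁻¹] →ₗ[ℚ] ℚ where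
  toFun f := f.coeff 0
  map_add' f g := by simp
  map_smul' r f := by simp

theorem ctm_CT (r : ℚ) (n : ℤ) : ctm (LaurentPolynomial.C r * T n) = if n = 0 then r else 0 := by
  rw [← single_eq_C_mul_T]
  change (AddMonoidAlgebra.single n r : ℚ[T;T⁻¹]).coeff 0 = _
  rw [AddMonoidAlgebra.coeff_single, Finsupp.single_apply]

theorem ctm_T (n : ℤ) : ctm (T n) = if n = 0 then 1 else 0 := by
  simpa using ctm_CT 1 n

/-- the trinomial -/
noncomputable def xm : ℚ[T;T⁻¹] := 1 + (T 1 + T (-1))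

/-- moment functional -/
noncomputable def Lm (f : ℚ[X]) : ℚ := ctm ((1 - T 2) * aeval xm f)

theorem Lm_add (f g : ℚ[X]) : Lm (f + g) = Lm f + Lm g := by simp [Lm, mul_add]
theorem Lm_C_mul (r : ℚ) (f : ℚ[X]) : Lm (Polynomial.C r * f) = r * Lm f := by
  simp [Lm, ← Polynomial.smul_eq_C_mul]

theorem cm_pow (m : ℕ) (e : ℤ) : ctm (T e * (T 1 + T (-1)) ^ m) =
    ∑ r ∈ Finset.range (m + 1), if e + 2 * r - m = 0 then (m.choose r : ℚ) else 0 := by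
  rw [add_pow, Finset.mul_sum, map_sum]
  refine Finset.sum_congr rfl fun r hr => ?_
  have hr' : r ≤ m := by simpa [Nat.lt_succ_iff] using hr
  have : T e * (T 1 ^ r * T (-1) ^ (m - r) * (m.choose r : ℚ[T;T⁻¹])) =
      LaurentPolynomial.C (m.choose r : ℚ) * T (e + 2 * r - m) := by
    rw [T_pow, T_pow, show e + 2 * (r:ℤ) - m = e + (r * 1 + ((m - r : ℕ) : ℤ) * (-1)) by push_cast [hr']; ring,
      T_add, T_add, map_natCast]
    ring
  rw [this, ctm_CT]

theorem cm_even (k : ℕ) : ctm ((1 - T 2) * (T 1 + T (-1)) ^ (2 * k)) =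
    1 / ((k : ℚ) + 1) * ((2 * k).choose k) := by
  have h0 := cm_pow (2 * k) 0
  rw [T_zero, one_mul] at h0
  rw [sub_mul, one_mul, map_sub, h0, cm_pow, Finset.sum_eq_single k, if_pos (by push_cast; ring)]
  · cases k with
    | zero => simp
    | succ k =>
      rw [Finset.sum_eq_single k, if_pos (by push_cast; ring)]
      · have h := Nat.choose_succ_right_eq (2 * (k + 1)) k
        rw [show 2 * (k + 1) - k = k + 2 by omega] at h
        have h' : (((2 * (k + 1)).choose (k + 1) : ℕ) : ℚ) * (k + 1) = ((2 * (k + 1)).choose k : ℕ) * (k + 2) := by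
          exact_mod_cast h
        push_cast
        have : (k : ℚ) + 1 + 1 ≠ 0 := by positivity
        field_simp
        linear_combination h'
      · intro b _ hb
        rw [if_neg]; push_cast; omega
      · intro h; exact absurd (Finset.mem_range.2 (by omega)) h
  · intro b _ hb
    rw [if_neg]; push_cast; omega
  · intro h; exact absurd (Finset.mem_range.2 (by omega)) h

theorem cm_odd (k : ℕ) : ctm ((1 - T 2) * (T 1 + T (-1)) ^ (2 * k + 1)) = 0 := by
  have h0 := cm_pow (2 * k + 1) 0
  rw [T_zero, one_mul] at h0
  rw [sub_mul, one_mul, map_sub, h0, cm_pow, Finset.sum_eq_zero, Finset.sum_eq_zero, sub_zero]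
  all_goals
    intro b _
    rw [if_neg]; push_cast; omega

theorem sum_even_odd (f : ℕ → ℚ) (N : ℕ) :
    ∑ m ∈ Finset.range (2 * N), f m = ∑ k ∈ Finset.range N, (f (2 * k) + f (2 * k + 1)) := by
  induction N with
  | zero => simp
  | succ N ih =>
    rw [show 2 * (N + 1) = 2 * N + 1 + 1 from rfl, Finset.sum_range_succ, Finset.sum_range_succ, ih,
      Finset.sum_range_succ]
    ring

theorem Lm_X_pow (n : ℕ) : Lm (X ^ n) = motzkin n := by
  have h : Lm (X ^ n) = ∑ m ∈ Finset.range (n + 1),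
      (n.choose m : ℚ) * ctm ((1 - T 2) * (T 1 + T (-1)) ^ m) := by
    rw [Lm, map_pow, aeval_X, xm, add_comm, add_pow, Finset.mul_sum, map_sum]
    refine Finset.sum_congr rfl fun m _ => ?_
    rw [← smul_eq_mul (n.choose m : ℚ), ← map_smul, LaurentPolynomial.smul_eq_C_mul, map_natCast, one_pow]
    congr 1
    ring
  rw [h, Finset.sum_subset (s₂ := Finset.range (2 * (n + 1))), sum_even_odd, motzkin]
  · refine Finset.sum_congr rfl fun k _ => ?_
    rw [cm_even, cm_odd]; ring
  · intro a; simp; omega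
  · intro a _ h
    rw [Nat.choose_eq_zero_of_lt (by simpa using h)]; simp

/-- shifted monic Chebyshev polynomials -/
noncomputable def qm : ℕ → ℚ[X]
  | 0 => 1
  | 1 => X - 1
  | 2 => (X - 1) ^ 2 - 2
  | (n + 3) => (X - 1) * qm (n + 2) - qm (n + 1)

theorem qm_deg : ∀ n, (qm n).Monic ∧ (qm n).natDegree = n := by
  have key : ∀ (f g : ℚ[X]) (n : ℕ), f.Monic → f.natDegree = n → g.natDegree < n + 1 →
      ((X - 1) * f - g).Monic ∧ ((X - 1) * f - g).natDegree = n + 1 := by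
    intro f g n hf hn hg
    have h1 : ((X : ℚ[X]) - 1).Monic := by simpa using monic_X_sub_C (1 : ℚ)
    have h2 : ((X : ℚ[X]) - 1).natDegree = 1 := by simpa using natDegree_X_sub_C (1 : ℚ)
    have h3 : ((X - 1) * f).natDegree = n + 1 := by
      rw [h1.natDegree_mul hf, h2, hn, add_comm]
    have h4 := natDegree_sub_eq_left_of_natDegree_lt (p := (X - 1) * f) (q := g) (by omega)
    refine ⟨(h1.mul hf).sub_of_left (degree_lt_degree (by omega)), by omega⟩
  have h1 : (qm 1).Monic ∧ (qm 1).natDegree = 1 := by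
    simpa [qm] using And.intro (monic_X_sub_C (1 : ℚ)) (natDegree_X_sub_C (1 : ℚ))
  have h2 : (qm 2).Monic ∧ (qm 2).natDegree = 2 := by
    have := key (qm 1) 2 1 h1.1 h1.2 (by
      rw [show (2 : ℚ[X]) = ((2 : ℕ) : ℚ[X]) by norm_num, natDegree_natCast]; omega)
    rw [show qm 2 = (X - 1) * qm 1 - 2 by simp [qm]; ring]
    exact this
  have h3 : ∀ n, ((qm (n + 1)).Monic ∧ (qm (n + 1)).natDegree = n + 1) ∧
      ((qm (n + 2)).Monic ∧ (qm (n + 2)).natDegree = n + 2) := by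
    intro n
    induction n with
    | zero => exact ⟨h1, h2⟩
    | succ n ih =>
      refine ⟨ih.2, ?_⟩
      rw [qm]
      exact key _ _ _ ih.2.1 ih.2.2 (by omega)
  intro n
  cases n with
  | zero => simp [qm]
  | succ n => exact (h3 n).1

theorem T_inv : (T 1 : ℚ[T;T⁻¹]) * T (-1) = 1 := by rw [← T_add]; simp

theorem ae_qm (n : ℕ) : aeval xm (qm (n + 1)) = T (n + 1) + T (-(n + 1)) ∧
    aeval xm (qm (n + 2)) = T (n + 2) + T (-(n + 2)) := by
  have huv := T_inv
  induction n with
  | zero =>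
    constructor
    · simp [qm, xm]
    · simp only [qm, xm, map_sub, map_pow, aeval_X, map_one, map_ofNat]
      rw [show ((0 : ℕ) : ℤ) + 2 = 1 + 1 by norm_num, neg_add, T_add, T_add]
      linear_combination 2 * huv
  | succ n ih =>
    refine ⟨by convert ih.2 using 3 <;> (push_cast; ring), ?_⟩
    rw [qm, map_sub, map_mul, ih.1, ih.2, map_sub, aeval_X, map_one, xm]
    push_cast
    rw [show -((n : ℤ) + 1 + 2) = -((n : ℤ) + 1) + (-1) + (-1) by ring,
      show -((n : ℤ) + 2) = -((n : ℤ) + 1) + (-1) by ring,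
      show ((n : ℤ) + 1 + 2) = ((n : ℤ) + 1) + 1 + 1 by ring,
      show ((n : ℤ) + 2) = ((n : ℤ) + 1) + 1 by ring]
    generalize hz : (n : ℤ) + 1 = z
    simp only [T_add]
    linear_combination (T z + T (-z)) * huv

theorem aeD_qm (n : ℕ) :
    (T 1 - T (-1)) * aeval xm (derivative (qm (n + 1))) =
      LaurentPolynomial.C ((n : ℚ) + 1) * (T (n + 1) - T (-(n + 1))) ∧
    (T 1 - T (-1)) * aeval xm (derivative (qm (n + 2))) =
      LaurentPolynomial.C ((n : ℚ) + 2) * (T (n + 2) - T (-(n + 2))) := by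
  have huv := T_inv
  induction n with
  | zero =>
    constructor
    · simp [qm]
    · simp only [qm, xm]
      rw [show ((0 : ℕ) : ℤ) + 2 = 1 + 1 by norm_num, neg_add, T_add, T_add]
      simp [derivative_pow]
      ring
  | succ n ih =>
    refine ⟨by convert ih.2 using 3 <;> (push_cast; ring_nf), ?_⟩
    obtain ⟨h1, h2⟩ := ih
    have h3 := (ae_qm n).2
    have hx : aeval xm (X - 1 : ℚ[X]) = T 1 + T (-1) := by simp [xm]
    rw [qm, derivative_sub, derivative_mul, map_sub, map_add, map_mul, map_mul, h3, hx]
    have hd : derivative (X - 1 : ℚ[X]) = 1 := by simp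
    rw [hd, map_one]
    push_cast
    simp only [map_add, map_natCast, map_one, map_ofNat] at h1 h2 ⊢
    rw [show -((n : ℤ) + 1 + 2) = -((n : ℤ) + 1) + (-1) + (-1) by ring,
      show ((n : ℤ) + 1 + 2) = ((n : ℤ) + 1) + 1 + 1 by ring]
    rw [show -((n : ℤ) + 2) = -((n : ℤ) + 1) + (-1) by ring,
      show ((n : ℤ) + 2) = ((n : ℤ) + 1) + 1 by ring] at *
    generalize hz : (n : ℤ) + 1 = z at *
    simp only [T_add] at h1 h2 ⊢
    linear_combination (T 1 + T (-1)) * h2 - h1 + ((n : ℚ[T;T⁻¹]) + 1) * (T z - T (-z)) * huv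

/-- normalisation -/
def alm (n : ℕ) : ℚ := if n = 0 then 1 / 2 else 1

theorem ae_all (n : ℕ) : aeval xm (qm n) = LaurentPolynomial.C (alm n) * (T n + T (-n)) := by
  cases n with
  | zero =>
    simp only [alm, qm, if_true]
    simp
    rw [← two_mul, mul_one, show (2 : ℚ[T;T⁻¹]) = LaurentPolynomial.C 2 from (map_ofNat LaurentPolynomial.C 2).symm, ← map_mul]; norm_num
  | succ n => simpa [alm] using (ae_qm n).1

theorem aeD_all (n : ℕ) : (T 1 - T (-1)) * aeval xm (derivative (qm n)) =
    LaurentPolynomial.C (alm n * n) * (T n - T (-n)) := by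
  cases n with
  | zero => simp [qm]
  | succ n => simpa [alm] using (aeD_qm n).1

/-- the skew form -/
noncomputable def Wm (f g : ℚ[X]) : ℚ := Lm (f * derivative g - derivative f * g)

theorem Wm_qm (i j : ℕ) : Wm (qm i) (qm j) =
    if j = i + 1 then (2 * (i : ℚ) + 1) else if i = j + 1 then - (2 * (j : ℚ) + 1) else 0 := by
  have huv := T_inv
  have h : (1 - T 2) * aeval xm (qm i * derivative (qm j) - derivative (qm i) * qm j) =
      LaurentPolynomial.C (alm i * alm j * (i - j)) * T (i + j + 1)
      + LaurentPolynomial.C (alm i * alm j * (i + j)) * T (i - j + 1)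
      + LaurentPolynomial.C (- (alm i * alm j * (i + j))) * T (j - i + 1)
      + LaurentPolynomial.C (alm i * alm j * (j - i)) * T (1 - i - j) := by
    have e : (1 - T 2 : ℚ[T;T⁻¹]) = - T 1 * (T 1 - T (-1)) := by
      rw [show (2 : ℤ) = 1 + 1 by norm_num, T_add]
      linear_combination -huv
    rw [e, map_sub, map_mul, map_mul]
    have hi := ae_all i
    have hj := ae_all j
    have di := aeD_all i
    have dj := aeD_all j
    rw [hi, hj]
    simp only [sub_eq_add_neg, T_add, map_mul, map_add, map_neg] at *
    linear_combination (-T 1 * (LaurentPolynomial.C (alm i) * (T i + T (-i)))) * dj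
      + T 1 * (LaurentPolynomial.C (alm j) * (T j + T (-j))) * di
  rw [Wm, Lm, h]
  simp only [map_add, ctm_CT]
  rw [if_neg (by omega)]
  by_cases h1 : j = i + 1
  · subst h1
    rw [if_pos (by push_cast; ring), if_neg (by push_cast; omega), if_pos rfl]
    rcases Nat.eq_zero_or_pos i with h0 | h0
    · subst h0; simp [alm]; norm_num
    · rw [if_neg (by push_cast; omega)]
      simp [alm, h0.ne']; ring
  · rw [if_neg (by omega), if_neg h1]
    by_cases h2 : i = j + 1
    · subst h2
      rw [if_pos (by push_cast; ring), if_pos rfl]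
      rcases Nat.eq_zero_or_pos j with h0 | h0
      · subst h0; simp [alm]; norm_num
      · rw [if_neg (by push_cast; omega)]
        simp [alm, h0.ne']; ring
    · rw [if_neg (by omega), if_neg (by omega), if_neg h2]; simp

theorem Wm_X (i j : ℕ) : Wm (X ^ i) (X ^ j) = ((j : ℚ) - i) * motzkin (i + j - 1) := by
  have : (X ^ i * derivative (X ^ j) - derivative (X ^ i) * X ^ j : ℚ[X]) =
      Polynomial.C ((j : ℚ) - i) * X ^ (i + j - 1) := by
    rw [derivative_X_pow, derivative_X_pow]
    rcases i with _ | i <;> rcases j with _ | j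
    · simp
    · simp
    · simp; ring
    · rw [show i + 1 + (j + 1) - 1 = i + j + 1 by omega]
      simp only [Nat.add_sub_cancel, map_sub]
      ring
  rw [Wm, this, Lm_C_mul, Lm_X_pow]

/-- the functional as a linear map -/
noncomputable def Wl : ℚ[X] →ₗ[ℚ] ℚ[X] →ₗ[ℚ] ℚ :=
  LinearMap.mk₂ ℚ Wm
    (by intro f g h; rw [Wm, Wm, Wm, ← Lm_add]; congr 1; rw [derivative_add]; ring)
    (by intro r f g; rw [Wm, Wm, smul_eq_mul, ← Lm_C_mul]; congr 1
        rw [derivative_smul, Polynomial.smul_eq_C_mul, Polynomial.smul_eq_C_mul]; ring)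
    (by intro f g h; rw [Wm, Wm, Wm, ← Lm_add]; congr 1; rw [derivative_add]; ring)
    (by intro r f g; rw [Wm, Wm, smul_eq_mul, ← Lm_C_mul]; congr 1
        rw [derivative_smul, Polynomial.smul_eq_C_mul, Polynomial.smul_eq_C_mul]; ring)

theorem qm_sum (N : ℕ) (i : Fin N) : qm i = ∑ k : Fin N, (qm i).coeff k • (X : ℚ[X]) ^ (k : ℕ) := by
  rw [Fin.sum_univ_eq_sum_range (fun k => (qm i).coeff k • (X : ℚ[X]) ^ k)]
  conv_lhs => rw [as_sum_range' (qm i) N (by rw [(qm_deg i).2]; exact i.2)]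
  refine Finset.sum_congr rfl fun k _ => ?_
  rw [Polynomial.smul_eq_C_mul, C_mul_X_pow_eq_monomial]

theorem det_motzkin (n : ℕ) (hn : 1 ≤ n) :
    (Matrix.of fun i j : Fin (2 * n) =>
        ((j.val : ℚ) - (i.val : ℚ)) * motzkin (i.val + j.val - 1)).det =
      (∏ k ∈ Finset.range n, (4 * (k : ℚ) + 1)) ^ 2 := by
  set A : Matrix (Fin (2 * n)) (Fin (2 * n)) ℚ := Matrix.of fun i j : Fin (2 * n) =>
        ((j.val : ℚ) - (i.val : ℚ)) * motzkin (i.val + j.val - 1) with hA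
  set P : Matrix (Fin (2 * n)) (Fin (2 * n)) ℚ :=
    Matrix.of fun i j : Fin (2 * n) => (qm j).coeff i with hP
  have hdet : P.det = 1 := Matrix.det_matrixOfPolynomials (fun j : Fin (2 * n) => qm j)
    (fun i => (qm_deg i).2) (fun i => (qm_deg i).1)
  have hK := K_det n (fun k => 2 * (k : ℚ) + 1)
  have hT : P.transpose * A * P = Matrix.of fun i j : Fin (2 * n) =>
      if j.val = i.val + 1 then (2 * (i.val : ℚ) + 1)
      else if i.val = j.val + 1 then - (2 * (j.val : ℚ) + 1) else 0 := by
    ext i j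
    rw [Matrix.of_apply, ← Wm_qm]
    have : Wm (qm i) (qm j) = Wl (qm i) (qm j) := rfl
    rw [this, qm_sum _ i, qm_sum _ j]
    simp only [map_sum, LinearMap.sum_apply, map_smul, LinearMap.smul_apply]
    have hX : ∀ a b : ℕ, Wl (X ^ a) (X ^ b) = ((b : ℚ) - a) * motzkin (a + b - 1) := Wm_X
    simp only [hX, Matrix.mul_apply, Matrix.transpose_apply, hA, hP, Matrix.of_apply, smul_eq_mul,
      Finset.sum_mul, Finset.mul_sum]
    refine Finset.sum_congr rfl fun k _ => Finset.sum_congr rfl fun l _ => ?_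
    ring
  have h2 : (P.transpose * A * P).det = A.det := by
    rw [Matrix.det_mul, Matrix.det_mul, Matrix.det_transpose, hdet]; ring
  rw [← h2, hT, hK]
  congr 1
  refine Finset.prod_congr rfl fun k _ => ?_
  push_cast; ring
end

section
/- For every positive integer n, the determinant of the 2n×2n matrix whose (i,j) entry is (j−i)·D_{i+j−3} for 1 ≤ i,j ≤ 2n (with the convention that the (1,1) entry, whose factor j−i vanishes, is 0) equals (2^{(n+1)(n−1)}·(2n−1)·∏_{k=1}^{n−1} (4k−1))². -/
/-- The `n`-th central Delannoy number `D_n = ∑_{k=0}^{n} C(n,k)·C(n+k,k)`. -/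
def delannoy (n : ℕ) : ℚ :=
  ∑ k ∈ Finset.range (n + 1), (n.choose k : ℚ) * ((n + k).choose k)


open Polynomial in
/-- Dickson polynomials of the first kind in `X - 3`. -/
noncomputable def dp : ℕ → ℚ[X]
  | 0 => 2
  | 1 => X - 3
  | (k+2) => (X - 3) * dp (k+1) - 2 * dp k

open Polynomial in
/-- Shifted Dickson polynomials of the second kind in `X - 3`. -/
noncomputable def dv : ℕ → ℚ[X]
  | 0 => 0
  | 1 => 1
  | (k+2) => (X - 3) * dv (k+1) - 2 * dv k

section
open Polynomial

lemma dp_two (k : ℕ) : dp (k+2) = (X - 3) * dp (k+1) - 2 * dp k := by rw [dp]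
lemma dv_two (k : ℕ) : dv (k+2) = (X - 3) * dv (k+1) - 2 * dv k := by rw [dv]

lemma dp_dv (k : ℕ) : dp (k+1) = dv (k+2) - 2 * dv k := by
  induction k using Nat.twoStepInduction with
  | zero => simp [dp, dv]
  | one => simp [dp, dv]; ring
  | more k h1 h2 =>
    rw [dp_two, h1, h2, dv_two (k+2), dv_two (k+1), dv_two k]; ring

lemma dp_deriv (k : ℕ) : derivative (dp k) = (k : ℚ[X]) * dv k := by
  induction k using Nat.twoStepInduction with
  | zero => simp [dp, dv]
  | one => simp [dp, dv]
  | more k h1 h2 =>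
    have := dp_dv k
    rw [dp_two, derivative_sub, derivative_mul, derivative_mul, h1, h2, this]
    have := dv_two k
    simp only [derivative_sub, derivative_X, derivative_ofNat]
    push_cast
    linear_combination (-(k:ℚ[X]) - 1) * this

lemma dp_mul_dv (i : ℕ) : ∀ d, dp i * dv (i + d) = dv (2 * i + d) + 2 ^ i * dv d := by
  induction i using Nat.twoStepInduction with
  | zero => intro d; simp [dp]; ring
  | one =>
    intro d
    have := dv_two d
    simp only [dp]
    rw [show 1 + d = d + 1 by ring, show 2 * 1 + d = d + 2 by ring]
    linear_combination -this
  | more i h1 h2 =>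
    intro d
    have a := h1 (d+2)
    have b := h2 (d+1)
    have c := dv_two d
    have e := dv_two (2*i+d+2)
    rw [dp_two]
    simp only [show i + 2 + d = i + (d + 2) by ring, show i + 1 + (d + 1) = i + (d + 2) by ring,
      show 2 * (i+2) + d = 2*i+d+2+2 by ring, show 2 * (i+1) + (d+1) = 2*i+d+2+1 by ring,
      show 2 * i + (d+2) = 2*i+d+2 by ring] at *
    linear_combination (X-3) * b - 2 * a - e - 2^(i+1) * c

lemma dv_mul_dp (i : ℕ) : ∀ d, dp (i + d) * dv i = dv (2 * i + d) - 2 ^ i * dv d := by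
  induction i using Nat.twoStepInduction with
  | zero => intro d; simp [dv]
  | one =>
    intro d
    have := dp_dv d
    simp only [dv]
    rw [show 1 + d = d + 1 by ring, show 2 * 1 + d = d + 2 by ring]
    linear_combination this
  | more i h1 h2 =>
    intro d
    have a := h1 (d+2)
    have b := h2 (d+1)
    have c := dv_two d
    have e := dv_two (2*i+d+2)
    rw [dv_two]
    simp only [show i + 2 + d = i + (d + 2) by ring, show i + 1 + (d + 1) = i + (d + 2) by ring,
      show 2 * (i+2) + d = 2*i+d+2+2 by ring, show 2 * (i+1) + (d+1) = 2*i+d+2+1 by ring,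
      show 2 * i + (d+2) = 2*i+d+2 by ring] at *
    linear_combination (X-3) * b - 2 * a - e + 2^(i+1) * c

lemma dp_monic (k : ℕ) : (dp (k+1)).Monic ∧ (dp (k+1)).natDegree = k + 1 := by
  have hX : (X - 3 : ℚ[X]) = X - C 3 := by rw [map_ofNat]
  induction k using Nat.strong_induction_on with
  | _ k ih =>
  match k with
  | 0 => simp only [dp, hX]; exact ⟨monic_X_sub_C _, natDegree_X_sub_C _⟩
  | k+1 =>
    obtain ⟨h1, h2⟩ := ih k (by omega)
    have hm : ((X - C 3) * dp (k+1)).Monic := (monic_X_sub_C _).mul h1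
    have hd : ((X - C 3) * dp (k+1)).natDegree = k + 2 := by
      rw [(monic_X_sub_C _).natDegree_mul h1, natDegree_X_sub_C, h2]; ring
    have hk : (dp k).natDegree ≤ k := by
      match k with
      | 0 => simp [dp]
      | k+1 => exact (ih k (by omega)).2.le
    have hk2 : (2 * dp k).natDegree ≤ k := by
      have : (2 * dp k) = C 2 * dp k := by rw [map_ofNat]
      rw [this]; exact (natDegree_C_mul_le _ _).trans hk
    have hlt : (2 * dp k).degree < ((X - C 3) * dp (k+1)).degree := by
      rw [degree_eq_natDegree hm.ne_zero, hd]
      refine degree_le_natDegree.trans_lt ?_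
      exact_mod_cast (by omega)
    rw [dp_two, hX]
    refine ⟨hm.sub_of_left hlt, ?_⟩
    rw [natDegree_sub_eq_left_of_natDegree_lt (by omega), hd]

open LaurentPolynomial in
/-- `z + 3 + 2/z` -/
noncomputable def zz : ℚ[T;T⁻¹] := T 1 + 3 + 2 * T (-1)

/-- The moment functional. -/
noncomputable def LL : ℚ[X] →ₗ[ℚ] ℚ where
  toFun f := (aeval zz f).coeff 0
  map_add' f g := by simp
  map_smul' c f := by simp

open LaurentPolynomial in
lemma aeval_dp (k : ℕ) : aeval zz (dp k) = T k + 2 ^ k * T (-k) := by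
  have hT : (T 1 * T (-1) : ℚ[T;T⁻¹]) = 1 := by rw [← T_add]; simp
  have hT' : (T (-1) : ℚ[T;T⁻¹]) ^ k = T (-k) := by rw [T_pow]; simp
  have hT'' : (T 1 : ℚ[T;T⁻¹]) ^ k = T k := by rw [T_pow]; simp
  rw [← hT', ← hT'']
  clear hT' hT''
  induction k using Nat.twoStepInduction with
  | zero => simp only [dp, map_ofNat]; norm_num
  | one => simp only [dp, zz, map_sub, aeval_X, map_ofNat]; ring
  | more k h1 h2 =>
    rw [dp_two]
    simp only [map_sub, map_mul, h1, h2, aeval_X, map_ofNat]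
    rw [zz]
    linear_combination (2 * T 1 ^ k + 2 ^ (k+1) * T (-1) ^ k) * hT

lemma LL_dp (k : ℕ) : LL (dp (k+1)) = 0 := by
  show (aeval zz (dp (k+1))).coeff 0 = 0
  rw [aeval_dp]
  have : (2 ^ (k+1) : LaurentPolynomial ℚ) = LaurentPolynomial.C (2 ^ (k+1)) := by rw [map_pow, map_ofNat]
  rw [this, ← LaurentPolynomial.single_eq_C_mul_T]
  rw [AddMonoidAlgebra.coeff_add, Finsupp.add_apply, LaurentPolynomial.T_apply,
    AddMonoidAlgebra.coeff_single, Finsupp.single_apply, if_neg (by omega), if_neg (by omega)]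
  simp

lemma LL_one : LL 1 = 1 := by
  show (aeval zz 1).coeff 0 = 1
  rw [map_one, ← LaurentPolynomial.T_zero, LaurentPolynomial.T_apply]; simp

lemma LL_dv_two (k : ℕ) : LL (dv (k+2)) = 2 * LL (dv k) := by
  have := congrArg LL (dp_dv k)
  rw [LL_dp, map_sub, show (2 * dv k : ℚ[X]) = (2:ℚ) • dv k by rw [smul_eq_C_mul, map_ofNat], map_smul, smul_eq_mul] at this
  linarith

lemma LL_dv_even (k : ℕ) : LL (dv (2*k)) = 0 := by
  induction k with
  | zero => simp [dv]
  | succ k ih => rw [show 2*(k+1) = 2*k+2 by ring, LL_dv_two, ih]; simp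

lemma LL_dv_odd (k : ℕ) : LL (dv (2*k+1)) = 2^k := by
  induction k with
  | zero => simp [dv, LL_one]
  | succ k ih => rw [show 2*(k+1)+1 = 2*k+1+2 by ring, LL_dv_two, ih]; ring

lemma LL_X_pow (n : ℕ) : LL (X^n) = delannoy n := by
  show (aeval zz (X^n)).coeff 0 = _
  have hT : (LaurentPolynomial.T 1 * LaurentPolynomial.T (-1) : LaurentPolynomial ℚ) = 1 := by
    rw [← LaurentPolynomial.T_add]; simp
  have h : zz = toLaurent ((1 + X) * ((1 + X) + 1) : ℚ[X]) * LaurentPolynomial.T (-1) := by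
    simp [zz]
    linear_combination (-(LaurentPolynomial.T 1) - 3) * hT
  rw [map_pow, aeval_X, h, mul_pow, ← map_pow, LaurentPolynomial.T_pow]
  have h2 : (toLaurent (((1 + X) * ((1 + X) + 1) : ℚ[X]) ^ n) * LaurentPolynomial.T (n * -1)).coeff 0
     = (((1 + X) * ((1 + X) + 1) : ℚ[X]) ^ n).coeff n := by
    generalize (((1 + X) * ((1 + X) + 1) : ℚ[X]) ^ n) = f
    rw [LaurentPolynomial.T, AddMonoidAlgebra.coeff_mul_single_eq_coeff_mul (n : ℤ) (by intros; omega), mul_one]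
    rw [LaurentPolynomial.coeff_toLaurent]
    exact Finsupp.mapDomain_apply Nat.castEmbedding.injective _ _
  rw [h2, mul_pow, add_pow (1 + X) (1 : ℚ[X]) n, Finset.mul_sum, finsetSum_coeff, delannoy]
  refine Finset.sum_congr rfl fun k hk => ?_
  rw [one_pow, mul_one, ← mul_assoc, ← pow_add, coeff_mul_natCast, coeff_one_add_X_pow, mul_comm,
    ← Nat.choose_symm_add]

/-- The skew form. -/
noncomputable def FF (f g : ℚ[X]) : ℚ := LL (f * derivative g - derivative f * g)

lemma FF_swap (f g : ℚ[X]) : FF g f = - FF f g := by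
  rw [FF, FF, ← map_neg]; congr 1; ring

lemma FF_X (i j : ℕ) : FF (X^i) (X^j) = ((j:ℚ) - i) * delannoy (i + j - 1) := by
  rw [← LL_X_pow, ← smul_eq_mul, ← map_smul, FF]
  congr 1
  rw [smul_eq_C_mul]
  rcases i with _ | i <;> rcases j with _ | j
  · simp
  · simp
  · simp
    ring
  · simp only [derivative_X_pow]
    rw [show i + 1 + (j + 1) - 1 = i + j + 1 by omega]
    simp
    ring

lemma FF_dp (i d : ℕ) : FF (dp i) (dp (i+d)) = 2 * (i + d) * 2 ^ i * LL (dv d) := by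
  have e : LL (dv (2 * i + d)) = 2 ^ i * LL (dv d) := by
    induction i with
    | zero => simp
    | succ i ih => rw [show 2*(i+1)+d = 2*i+d+2 by ring, LL_dv_two, ih]; ring
  have : dp i * derivative (dp (i+d)) - derivative (dp i) * dp (i+d)
    = (d : ℚ) • dv (2*i+d) + ((2 * i + d) * 2 ^ i : ℚ) • dv d := by
    rw [dp_deriv, dp_deriv]
    have a := dp_mul_dv i d
    have b := dv_mul_dp i d
    simp only [smul_eq_C_mul, map_mul, map_add, map_pow, map_ofNat, map_natCast]
    push_cast
    linear_combination (i + d : ℚ[X]) * a - (i : ℚ[X]) * b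
  rw [FF, this, map_add, map_smul, map_smul, e]
  simp only [smul_eq_mul]; ring

lemma FF_sum_left {ι : Type*} (s : Finset ι) (f : ι → ℚ[X]) (c : ι → ℚ) (g : ℚ[X]) :
    FF (∑ i ∈ s, c i • f i) g = ∑ i ∈ s, c i * FF (f i) g := by
  simp only [FF, derivative_sum, derivative_smul, Finset.sum_mul, ← Finset.sum_sub_distrib,
    smul_mul_assoc, ← smul_sub, map_sum, map_smul, smul_eq_mul]

lemma FF_sum_right {ι : Type*} (s : Finset ι) (f : ι → ℚ[X]) (c : ι → ℚ) (g : ℚ[X]) :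
    FF g (∑ i ∈ s, c i • f i) = ∑ i ∈ s, c i * FF g (f i) := by
  rw [FF_swap, FF_sum_left, ← Finset.sum_neg_distrib]
  refine Finset.sum_congr rfl fun i _ => ?_
  rw [FF_swap g]; ring

lemma dp_natDegree (k : ℕ) : (dp k).natDegree = k := by
  match k with
  | 0 => simp [dp]
  | k+1 => exact (dp_monic k).2

/-- coefficient matrix -/
noncomputable def PP (N : ℕ) : Matrix (Fin N) (Fin N) ℚ := Matrix.of fun i j => (dp i).coeff j

lemma PP_det (N : ℕ) : (PP (N+1)).det = 2 := by
  rw [Matrix.det_of_isLowerTriangular]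
  · rw [Fin.prod_univ_succ]
    have : ∀ i : Fin N, PP (N+1) i.succ i.succ = 1 := by
      intro i
      have h := dp_monic i
      have h1 := h.1.coeff_natDegree
      rw [h.2] at h1
      simpa [PP] using h1
    simp only [this]
    simp [PP, dp]
  · intro i j hij
    simp only [PP, Matrix.of_apply]
    apply coeff_eq_zero_of_natDegree_lt
    rw [dp_natDegree]
    exact hij

lemma dp_expand (N : ℕ) (i : Fin N) : dp i = ∑ k : Fin N, (dp i).coeff k • (X ^ (k:ℕ) : ℚ[X]) := by
  rw [Fin.sum_univ_eq_sum_range (fun k => (dp i).coeff k • (X ^ k : ℚ[X])) N]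
  conv_lhs => rw [as_sum_range_C_mul_X_pow' (p := dp i) (n := N) (by rw [dp_natDegree]; exact i.2)]
  simp [smul_eq_C_mul]

lemma conj_eq (N : ℕ) : PP N * (Matrix.of fun i j : Fin N =>
        ((j.val : ℚ) - (i.val : ℚ)) * delannoy (i.val + j.val - 1)) * (PP N).transpose
    = Matrix.of fun i j : Fin N => FF (dp i) (dp j) := by
  ext i j
  simp only [Matrix.mul_apply, Matrix.of_apply, Matrix.transpose_apply]
  rw [dp_expand N j, FF_sum_right]
  refine Finset.sum_congr rfl fun l _ => ?_
  conv_rhs => rw [dp_expand N i, FF_sum_left]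
  rw [mul_comm]
  congr 1
  refine Finset.sum_congr rfl fun k _ => ?_
  rw [FF_X]; rfl

/-- The reduced block. -/
def BB (n : ℕ) : Matrix (Fin n) (Fin n) ℚ := Matrix.of fun p q =>
  if p ≤ q then 2 * (q.val : ℚ) + 1 else - (2 * p.val)

/-- row operations -/
def UU (n : ℕ) : Matrix (Fin n) (Fin n) ℚ := Matrix.of fun p q =>
  if q = p then 1 else if q.val = p.val + 1 then -1 else 0

lemma UU_det (n : ℕ) : (UU n).det = 1 := by
  rw [Matrix.det_of_isUpperTriangular]
  · simp [UU]
  · intro i j hij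
    have h : j < i := hij
    simp only [UU, Matrix.of_apply]
    rw [if_neg h.ne, if_neg (by have : j.val < i.val := h; omega)]

lemma UU_mul (m : ℕ) (p : Fin m) (q : Fin (m+1)) :
    (UU (m+1) * BB (m+1)) p.castSucc q = BB (m+1) p.castSucc q - BB (m+1) p.succ q := by
  rw [Matrix.mul_apply, Finset.sum_eq_add p.castSucc p.succ]
  · simp [UU, Fin.ext_iff]; ring
  · simp [Fin.ext_iff]
  · rintro c - ⟨h1, h2⟩
    simp only [UU, Matrix.of_apply]
    rw [if_neg h1, if_neg (by intro h; apply h2; ext; simpa using h)]; simp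
  · simp
  · simp

lemma UU_mul_last (m : ℕ) (q : Fin (m+1)) :
    (UU (m+1) * BB (m+1)) (Fin.last m) q = BB (m+1) (Fin.last m) q := by
  rw [Matrix.mul_apply, Finset.sum_eq_single (Fin.last m)]
  · simp [UU]
  · rintro c - h1
    simp only [UU, Matrix.of_apply]
    rw [if_neg h1, if_neg (by simp; omega)]; simp
  · simp

lemma BB_det (m : ℕ) : (BB (m+1)).det = (2 * m + 1) * ∏ k ∈ Finset.range m, (4 * (k:ℚ) + 3) := by
  have h : (UU (m+1) * BB (m+1)).det = (BB (m+1)).det := by rw [Matrix.det_mul, UU_det, one_mul]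
  rw [← h, Matrix.det_of_isLowerTriangular]
  · rw [Fin.prod_univ_castSucc, UU_mul_last, mul_comm]
    congr 1
    · simp [BB]
    · rw [← Fin.prod_univ_eq_prod_range (fun k => (4 * (k:ℚ) + 3)) m]
      refine Finset.prod_congr rfl fun p _ => ?_
      rw [UU_mul]
      simp [BB]
      ring
  · intro i j hij
    have h : i < j := hij
    induction i using Fin.lastCases with
    | last => exact absurd (Fin.le_last j) (not_le.mpr h)
    | cast p =>
      rw [UU_mul]
      have : p.succ ≤ j := by
        rw [Fin.le_def]; rw [Fin.lt_def] at h; simp at h ⊢; omega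
      simp [BB, h.le, this]

lemma skew_det (n : ℕ) (B : Matrix (Fin n) (Fin n) ℚ) :
    (Matrix.fromBlocks 0 B (-B.transpose) 0).det = B.det ^ 2 := by
  have h : Matrix.fromBlocks 0 B (-B.transpose) 0 =
     Matrix.fromBlocks B 0 0 B.transpose * (Matrix.fromBlocks 1 1 0 1 *
       Matrix.fromBlocks 1 0 (-1) 1 * Matrix.fromBlocks 1 1 0 1) := by
    simp [Matrix.fromBlocks_multiply]
  rw [h]
  simp only [Matrix.det_mul, Matrix.det_fromBlocks_zero₂₁, Matrix.det_fromBlocks_zero₁₂,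
    Matrix.det_transpose, Matrix.det_one]
  ring

/-- parity splitting -/
def par (n : ℕ) : Fin n ⊕ Fin n ≃ Fin (2 * n) where
  toFun := Sum.elim (fun p => ⟨2 * p.val, by omega⟩) (fun p => ⟨2 * p.val + 1, by omega⟩)
  invFun i := if i.val % 2 = 0 then .inl ⟨i.val / 2, by omega⟩ else .inr ⟨i.val / 2, by omega⟩
  left_inv := by
    rintro (p | p)
    · simp
    · have h : (2 * p.val + 1) / 2 = p.val := by omega
      simp [Nat.add_mod, h]
  right_inv := by
    intro i
    by_cases h : i.val % 2 = 0
    · simp only [h, if_true]; ext; simp; omega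
    · simp only [h, if_false]; ext; simp; omega

lemma FF_even (a b : ℕ) (h : (a + b) % 2 = 0) : FF (dp a) (dp b) = 0 := by
  wlog hab : a ≤ b generalizing a b
  · rw [FF_swap, this b a (by omega) (by omega), neg_zero]
  obtain ⟨d, rfl⟩ := Nat.exists_eq_add_of_le hab
  obtain ⟨k, rfl⟩ : ∃ k, d = 2 * k := ⟨d / 2, by omega⟩
  rw [FF_dp, LL_dv_even, mul_zero]

lemma FF_odd (p q : ℕ) : FF (dp (2*p)) (dp (2*q+1)) =
    2 ^ p * (2 ^ (q+1) * (if p ≤ q then 2 * (q:ℚ) + 1 else - (2 * p))) := by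
  split_ifs with h
  · obtain ⟨d, rfl⟩ := Nat.exists_eq_add_of_le h
    rw [show 2 * (p + d) + 1 = 2 * p + (2 * d + 1) by ring, FF_dp, LL_dv_odd]
    push_cast; ring
  · obtain ⟨d, rfl⟩ := Nat.exists_eq_add_of_lt (not_le.mp h)
    rw [FF_swap, show 2 * (q + d + 1) = 2 * q + 1 + (2 * d + 1) by ring, FF_dp, LL_dv_odd]
    push_cast; ring

lemma FF_det (n : ℕ) : (Matrix.of fun i j : Fin (2*n) => FF (dp i) (dp j)).det
    = (2 ^ (n^2) * (BB n).det) ^ 2 := by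
  rw [← Matrix.det_submatrix_equiv_self (par n)]
  have h : (Matrix.of fun i j : Fin (2*n) => FF (dp i) (dp j)).submatrix (par n) (par n)
    = Matrix.fromBlocks 0 (Matrix.of fun p q : Fin n => FF (dp (2*p)) (dp (2*q+1)))
      (-(Matrix.of fun p q : Fin n => FF (dp (2*p)) (dp (2*q+1))).transpose) 0 := by
    ext i j
    rcases i with i | i <;> rcases j with j | j
    · simp [par]; exact FF_even _ _ (by omega)
    · simp [par]
    · simp [par]; exact FF_swap _ _
    · simp [par]; exact FF_even _ _ (by omega)
  rw [h, skew_det]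
  congr 1
  have h2 : (Matrix.of fun p q : Fin n => FF (dp (2*p)) (dp (2*q+1))) =
    Matrix.of fun p q : Fin n => (2:ℚ) ^ (p:ℕ) *
      (Matrix.of fun p q : Fin n => (2:ℚ) ^ ((q:ℕ)+1) * BB n p q) p q := by
    ext p q
    simp only [Matrix.of_apply, FF_odd, BB, Fin.le_def]
  rw [h2, Matrix.det_mul_column (fun p : Fin n => (2:ℚ) ^ (p:ℕ)),
    Matrix.det_mul_row (fun q : Fin n => (2:ℚ) ^ ((q:ℕ)+1)), ← mul_assoc, ← Finset.prod_mul_distrib]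
  congr 1
  rw [Fin.prod_univ_eq_prod_range (fun k => (2:ℚ) ^ k * 2 ^ (k+1)) n]
  induction n with
  | zero => simp
  | succ n ih =>
    rw [Finset.prod_range_succ]
    clear h h2
    have : ∏ x ∈ Finset.range n, (2:ℚ) ^ x * 2 ^ (x+1) = 2 ^ n^2 := by
      clear ih
      induction n with
      | zero => simp
      | succ n ih => rw [Finset.prod_range_succ, ih]; ring
    rw [this]; ring

end

theorem det_delannoy (n : ℕ) (hn : 1 ≤ n) :
    (Matrix.of fun i j : Fin (2 * n) =>
        ((j.val : ℚ) - (i.val : ℚ)) * delannoy (i.val + j.val - 1)).det =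
      (2 ^ ((n + 1) * (n - 1)) * (2 * (n : ℚ) - 1) *
        ∏ k ∈ Finset.Icc 1 (n - 1), (4 * (k : ℚ) - 1)) ^ 2 := by
  obtain ⟨m, rfl⟩ : ∃ m, n = m + 1 := ⟨n - 1, by omega⟩
  have h := congrArg Matrix.det (conj_eq (2 * (m+1)))
  have hP : (PP (2 * (m+1))).det = 2 := PP_det (2 * m + 1)
  rw [Matrix.det_mul, Matrix.det_mul, Matrix.det_transpose, hP, FF_det, BB_det] at h
  have hprod : ∏ k ∈ Finset.Icc 1 (m + 1 - 1), (4 * (k : ℚ) - 1)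
      = ∏ k ∈ Finset.range m, (4 * (k:ℚ) + 3) := by
    clear h hP hn
    rw [Nat.add_sub_cancel]
    induction m with
    | zero => simp
    | succ m ih =>
      rw [Finset.prod_Icc_succ_top (by omega), ih, Finset.prod_range_succ]
      push_cast; ring
  rw [hprod]
  have e : (m+1)^2 = (m + 1 + 1) * (m + 1 - 1) + 1 := by
    rw [Nat.add_sub_cancel]; ring
  rw [e] at h
  generalize (m + 1 + 1) * (m + 1 - 1) = w at h ⊢
  push_cast
  linear_combination h / 4
end

section
/- For every integer n ≥ 0 and every complex number x, the Pfaffian of the 2n×2n skew-symmetric matrix whose (i,j) entry is (j−i)·N_{i+j−2}(x) for 1 ≤ i,j ≤ 2n equals x^{n²}·∏_{k=0}^{n−1} (4k+1). -/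
/-- The `n`-th Narayana polynomial, `N_0(x) = 1` and
`N_n(x) = ∑_{k=0}^{n} (1/n)·C(n,k)·C(n,k-1)·x^k` for `n ≥ 1`
(the binomial coefficient `C(n,k-1)` being `0` for `k = 0`). -/
noncomputable def narayana (n : ℕ) (x : ℂ) : ℂ :=
  if n = 0 then 1
  else ∑ k ∈ Finset.range (n + 1),
    (1 / (n : ℂ)) * (n.choose k) * (if k = 0 then 0 else (n.choose (k - 1) : ℂ)) * x ^ k

namespace PfN

open Equiv Finset

def e (N : ℕ) : Fin N × Bool ≃ Fin (2 * N) where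
  toFun p := ⟨2 * p.1.val + (if p.2 then 1 else 0), by have := p.1.isLt; split <;> omega⟩
  invFun k := (⟨k.val / 2, by have := k.isLt; omega⟩, decide (k.val % 2 = 1))
  left_inv := by
    rintro ⟨i, b⟩
    cases b <;> simp [Fin.ext_iff] <;> omega
  right_inv := by
    intro k
    by_cases h : k.val % 2 = 1 <;> simp [h, Fin.ext_iff] <;> omega

def fl (b : Bool) : Perm Bool := if b then Equiv.swap false true else 1

def hh {N : ℕ} (p : (Fin N → Bool) × Perm (Fin N)) : Perm (Fin N × Bool) :=
  prodCongrLeft (fun _ : Bool => p.2) * prodCongrRight (fun i => fl (p.1 i))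

lemma hh_apply {N : ℕ} (p : (Fin N → Bool) × Perm (Fin N)) (i : Fin N) (b : Bool) :
    hh p (i, b) = (p.2 i, fl (p.1 i) b) := by
  simp [hh, Equiv.prodCongrLeft, Equiv.prodCongrRight]

lemma sign_hh {N : ℕ} (p : (Fin N → Bool) × Perm (Fin N)) :
    Perm.sign (hh p) = ∏ i, Perm.sign (fl (p.1 i)) := by
  unfold hh
  rw [Perm.sign_mul, Perm.sign_prodCongrRight, Perm.sign_prodCongrLeft]
  simp

def FF {N : ℕ} (A : Matrix (Fin (2 * N)) (Fin (2 * N)) ℂ) (σ : Perm (Fin (2 * N))) : ℂ :=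
  ((Perm.sign σ : ℤ) : ℂ) * ∏ i : Fin N, A (σ (e N (i, false))) (σ (e N (i, true)))

def hc {N : ℕ} (p : (Fin N → Bool) × Perm (Fin N)) : Perm (Fin (2 * N)) := (e N).permCongr (hh p)

lemma hc_apply {N : ℕ} (p : (Fin N → Bool) × Perm (Fin N)) (i : Fin N) (b : Bool) :
    hc p (e N (i, b)) = e N (p.2 i, fl (p.1 i) b) := by
  simp [hc, hh_apply]

lemma FF_mul {N : ℕ} (A : Matrix (Fin (2 * N)) (Fin (2 * N)) ℂ) (hA : ∀ i j, A j i = - A i j)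
    (σ : Perm (Fin (2 * N))) (p : (Fin N → Bool) × Perm (Fin N)) :
    FF A (σ * hc p) = FF A σ := by
  unfold FF
  have h1 : ∀ i, A ((σ * hc p) (e N (i, false))) ((σ * hc p) (e N (i, true)))
      = ((Perm.sign (fl (p.1 i)) : ℤ) : ℂ) *
        A (σ (e N (p.2 i, false))) (σ (e N (p.2 i, true))) := by
    intro i
    rw [Perm.mul_apply, Perm.mul_apply, hc_apply, hc_apply]
    cases p.1 i
    · simp [fl]
    · simp [fl]
      exact hA _ _
  rw [prod_congr rfl (fun i _ => h1 i), prod_mul_distrib]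
  rw [Equiv.prod_comp p.2 (fun i => A (σ (e N (i, false))) (σ (e N (i, true))))]
  rw [Perm.sign_mul]
  have h2 : Perm.sign (hc p) = ∏ i, Perm.sign (fl (p.1 i)) := by
    rw [hc, Perm.sign_permCongr, sign_hh]
  rw [h2]
  have h3 : ((∏ i, Perm.sign (fl (p.1 i)) : ℤˣ) : ℂ) * ((∏ i, Perm.sign (fl (p.1 i)) : ℤˣ) : ℂ) = 1 := by
    generalize (∏ i, Perm.sign (fl (p.1 i))) = u
    have : (u : ℤ) * (u : ℤ) = 1 := by rw [← Units.val_mul, Int.units_mul_self]; rfl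
    exact_mod_cast this
  push_cast at h3 ⊢
  linear_combination (((Perm.sign σ : ℤ) : ℂ) * ∏ i : Fin N, A (σ (e N (i, false))) (σ (e N (i, true)))) * h3

def Can {N : ℕ} (σ : Perm (Fin (2 * N))) : Prop :=
  (∀ i : Fin N, σ (e N (i, false)) < σ (e N (i, true))) ∧
  (∀ i j : Fin N, i < j → σ (e N (i, false)) < σ (e N (j, false)))

open Classical in
lemma pf_eq {N : ℕ} (A : Matrix (Fin (2 * N)) (Fin (2 * N)) ℂ) :
    pfaffian A = ∑ σ : Perm (Fin (2 * N)), if Can σ then FF A σ else 0 := by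
  unfold pfaffian
  rw [sum_filter]
  apply sum_congr rfl
  intro σ _
  simp only [Can, FF, e, Equiv.coe_fn_mk, zsmul_eq_mul]
  simp

lemma fl_cases (b : Bool) : (b = false ∧ fl b = 1) ∨ (b = true ∧ fl b = Equiv.swap false true) := by
  cases b <;> simp [fl]

lemma exu {N : ℕ} (σ : Perm (Fin (2 * N))) : ∃! p : (Fin N → Bool) × Perm (Fin N), Can (σ * hc p) := by
  classical
  set m : Fin N → Fin (2 * N) := fun k => min (σ (e N (k, false))) (σ (e N (k, true))) with hm
  have key : ∀ p : (Fin N → Bool) × Perm (Fin N), Can (σ * hc p) ↔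
      (∀ i, p.1 i = decide (σ (e N (p.2 i, true)) < σ (e N (p.2 i, false)))) ∧
      StrictMono (m ∘ p.2) := by
    intro p
    have ne : ∀ k, σ (e N (k, true)) ≠ σ (e N (k, false)) := by
      intro k h
      simpa using (e N).injective (σ.injective h)
    have c1 : ∀ i, ((σ * hc p) (e N (i, false)) < (σ * hc p) (e N (i, true)) ↔
        p.1 i = decide (σ (e N (p.2 i, true)) < σ (e N (p.2 i, false)))) := by
      intro i
      rw [Perm.mul_apply, Perm.mul_apply, hc_apply, hc_apply]
      have := ne (p.2 i)
      rcases fl_cases (p.1 i) with ⟨h, h'⟩ | ⟨h, h'⟩ <;> rw [h, ← h, h', h] <;> simp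
      exact ⟨fun h => h.le, fun h => lt_of_le_of_ne h this.symm⟩
    have c2 : ∀ i, (σ * hc p) (e N (i, false)) < (σ * hc p) (e N (i, true)) →
        (σ * hc p) (e N (i, false)) = m (p.2 i) := by
      intro i
      rw [Perm.mul_apply, Perm.mul_apply, hc_apply, hc_apply]
      rcases fl_cases (p.1 i) with ⟨h, h'⟩ | ⟨h, h'⟩ <;> rw [h'] <;> simp [hm] <;> intro h <;> exact h.le
    constructor
    · rintro ⟨h1, h2⟩
      refine ⟨fun i => (c1 i).1 (h1 i), fun i j hij => ?_⟩
      have := h2 i j hij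
      rw [c2 i (h1 i), c2 j (h1 j)] at this
      exact this
    · rintro ⟨h1, h2⟩
      have h1' := fun i => (c1 i).2 (h1 i)
      refine ⟨h1', fun i j hij => ?_⟩
      rw [c2 i (h1' i), c2 j (h1' j)]
      exact h2 hij
  have minj : Function.Injective m := by
    intro k l h
    simp only [hm] at h
    rcases min_choice (σ (e N (k, false))) (σ (e N (k, true))) with h1 | h1 <;>
    rcases min_choice (σ (e N (l, false))) (σ (e N (l, true))) with h2 | h2 <;>
    · rw [h1, h2] at h
      have := (e N).injective (σ.injective h)
      exact (Prod.ext_iff.1 this).1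
  refine ⟨(fun i => decide (σ (e N (Tuple.sort m i, true)) < σ (e N (Tuple.sort m i, false))),
    Tuple.sort m), ?_, ?_⟩
  · dsimp only
    rw [key]
    exact ⟨fun i => rfl, (Tuple.monotone_sort m).strictMono_of_injective
      (minj.comp (Tuple.sort m).injective)⟩
  · rintro ⟨ε, π⟩ h
    rw [key] at h
    obtain ⟨h1, h2⟩ := h
    have : m ∘ π = m ∘ Tuple.sort m := Tuple.comp_sort_eq_comp_iff_monotone.2 h2.monotone
    have : π = Tuple.sort m := by
      ext i
      exact congrArg Fin.val (minj (congrFun this i))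
    subst this
    ext1
    · funext i; exact h1 i
    · rfl

def pfull {N : ℕ} (A : Matrix (Fin (2 * N)) (Fin (2 * N)) ℂ) : ℂ := ∑ σ, FF A σ

lemma pfull_eq {N : ℕ} (A : Matrix (Fin (2 * N)) (Fin (2 * N)) ℂ) (hA : ∀ i j, A j i = - A i j) :
    pfull A = (Fintype.card ((Fin N → Bool) × Perm (Fin N)) : ℂ) * pfaffian A := by
  classical
  have h1 : ∀ p : (Fin N → Bool) × Perm (Fin N),
      pfaffian A = ∑ σ : Perm (Fin (2 * N)), if Can (σ * hc p) then FF A σ else 0 := by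
    intro p
    rw [pf_eq, ← Equiv.sum_comp (Equiv.mulRight (hc p))]
    apply sum_congr rfl
    intro σ _
    simp only [Equiv.coe_mulRight, FF_mul A hA]
  have h2 : (Fintype.card ((Fin N → Bool) × Perm (Fin N)) : ℂ) * pfaffian A =
      ∑ p : (Fin N → Bool) × Perm (Fin N), pfaffian A := by
    simp
  rw [h2, sum_congr rfl (fun p _ => h1 p), sum_comm, pfull]
  apply sum_congr rfl
  intro σ _
  obtain ⟨p, hp, hu⟩ := exu σ
  rw [sum_eq_single p]
  · rw [if_pos hp]
  · intro q _ hq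
    rw [if_neg]
    exact fun h => hq (hu q h)
  · simp

lemma det_sub {m : Type*} [Fintype m] [DecidableEq m] (B : Matrix m m ℂ) (f : m → m) (hf : ¬ Function.Bijective f) :
    ∑ σ : Perm m, ((Perm.sign σ : ℤ) : ℂ) * ∏ j, B (σ j) (f j) = 0 := by
  have := Matrix.det_apply' (B.submatrix id f)
  simp only [Matrix.submatrix_apply, id] at this
  rw [← this]
  rw [← Finite.injective_iff_bijective, Function.Injective] at hf
  push Not at hf
  obtain ⟨i, j, h, hij⟩ := hf
  exact Matrix.det_zero_of_column_eq hij (by intro k; simp [h])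

lemma det_sub' {m : Type*} [Fintype m] [DecidableEq m] (B : Matrix m m ℂ) (τ : Perm m) :
    ∑ σ : Perm m, ((Perm.sign σ : ℤ) : ℂ) * ∏ j, B (σ j) (τ j) = ((Perm.sign τ : ℤ) : ℂ) * B.det := by
  rw [← Matrix.det_permute', Matrix.det_apply']
  rfl

lemma pfull_conj {N : ℕ} (A B : Matrix (Fin (2 * N)) (Fin (2 * N)) ℂ) :
    pfull (B * A * B.transpose) = B.det * pfull A := by
  classical
  have hent : ∀ a b, (B * A * B.transpose) a b = ∑ kl : Fin (2 * N) × Fin (2 * N),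
      B a kl.1 * B b kl.2 * A kl.1 kl.2 := by
    intro a b
    simp only [Matrix.mul_apply, Matrix.transpose_apply, sum_mul, Fintype.sum_prod_type]
    rw [sum_comm]
    apply sum_congr rfl; intro k _; apply sum_congr rfl; intro l _; ring
  have hprod : ∀ g : Fin (2 * N) → ℂ, ∏ j, g j = ∏ i : Fin N, (g (e N (i, false)) * g (e N (i, true))) := by
    intro g
    rw [← Equiv.prod_comp (e N), Fintype.prod_prod_type]
    simp [mul_comm]
  -- reindex
  let E : (Fin (2 * N) → Fin (2 * N)) ≃ (Fin N → Fin (2 * N) × Fin (2 * N)) :=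
    { toFun := fun f i => (f (e N (i, false)), f (e N (i, true)))
      invFun := fun g k => if ((e N).symm k).2 then (g ((e N).symm k).1).2 else (g ((e N).symm k).1).1
      left_inv := by
        intro f; funext k
        obtain ⟨⟨i, b⟩, rfl⟩ := (e N).surjective k
        cases b <;> simp
      right_inv := by
        intro g; funext i; simp }
  have hF : ∀ σ, FF (B * A * B.transpose) σ = ∑ f : Fin (2 * N) → Fin (2 * N),
      (((Perm.sign σ : ℤ) : ℂ) * ∏ j, B (σ j) (f j)) * ∏ i, A (f (e N (i, false))) (f (e N (i, true))) := by
    intro σ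
    unfold FF
    simp only [hent]
    rw [Finset.prod_univ_sum, Fintype.piFinset_univ, mul_sum, ← Equiv.sum_comp E]
    apply sum_congr rfl
    intro f _
    rw [hprod (fun j => B (σ j) (f j)), mul_assoc, ← prod_mul_distrib]
    rfl
  unfold pfull
  simp only [hF]
  rw [sum_comm]
  simp only [← sum_mul]
  have : ∑ f : Fin (2 * N) → Fin (2 * N), (∑ σ : Perm (Fin (2 * N)), ((Perm.sign σ : ℤ) : ℂ) * ∏ j, B (σ j) (f j)) *
        ∏ i, A (f (e N (i, false))) (f (e N (i, true))) =
      ∑ f : Fin (2 * N) → Fin (2 * N) with Function.Bijective f, (∑ σ : Perm (Fin (2 * N)), ((Perm.sign σ : ℤ) : ℂ) * ∏ j, B (σ j) (f j)) *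
        ∏ i, A (f (e N (i, false))) (f (e N (i, true))) := by
    refine (sum_subset (filter_subset _ _) fun f _ hbij ↦ ?_).symm
    rw [det_sub, zero_mul]
    simpa only [mem_filter_univ] using hbij
  rw [this, mul_sum]
  symm
  refine sum_bij (fun τ _ => ⇑τ) ?_ ?_ ?_ ?_
  · intro τ _; exact mem_filter.2 ⟨mem_univ _, τ.bijective⟩
  · intro a _ b _ h; exact Equiv.coe_fn_injective h
  · intro f hf
    exact ⟨Equiv.ofBijective f (mem_filter.1 hf).2, mem_univ _, rfl⟩
  · intro τ _
    rw [det_sub', FF]; ring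

lemma pf_conj {N : ℕ} (A B : Matrix (Fin (2 * N)) (Fin (2 * N)) ℂ) (hA : ∀ i j, A j i = - A i j)
    (hB : B.det = 1) : pfaffian (B * A * B.transpose) = pfaffian A := by
  have hA' : A.transpose = -A := by ext i j; exact hA i j
  have h1 := pfull_conj A B
  rw [pfull_eq A hA, pfull_eq, hB, one_mul] at h1
  · exact mul_left_cancel₀ (by exact_mod_cast Fintype.card_ne_zero) h1
  · intro i j
    have : (B * A * B.transpose).transpose = -(B * A * B.transpose) := by
      simp [Matrix.transpose_mul, hA', Matrix.mul_assoc]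
    exact congrFun (congrFun this i) j

lemma pf_tri {N : ℕ} (A : Matrix (Fin (2 * N)) (Fin (2 * N)) ℂ) (c : ℕ → ℂ)
    (h : ∀ i j : Fin (2 * N), i < j → A i j = if i.val + 1 = j.val then c i.val else 0) :
    pfaffian A = ∏ k ∈ range N, c (2 * k) := by
  classical
  rw [pf_eq, sum_eq_single 1]
  · have hc : Can (1 : Perm (Fin (2 * N))) := by
      constructor
      · intro i; simp [e, Fin.lt_def]
      · intro i j hij; rw [Fin.lt_def] at *; simp only [e, Equiv.coe_fn_mk, Perm.one_apply]; simp; omega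
    rw [if_pos hc, FF, ← Fin.prod_univ_eq_prod_range (fun k => c (2 * k))]
    simp only [Perm.sign_one, Units.val_one, Int.cast_one, one_mul]
    apply prod_congr rfl
    intro i _
    rw [h _ _ (hc.1 i)]
    simp [e]
  · intro σ _ hσ
    split_ifs with hc
    swap
    · rfl
    rw [FF]
    by_contra hne
    apply hσ
    have hadj : ∀ i, (σ (e N (i, false))).val + 1 = (σ (e N (i, true))).val := by
      intro i
      by_contra hi
      apply hne
      rw [prod_eq_zero (mem_univ i), mul_zero]
      rw [h _ _ (hc.1 i), if_neg hi]
    have hmono : StrictMono σ := by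
      intro a b hab
      obtain ⟨⟨i, a⟩, rfl⟩ := (e N).surjective a
      obtain ⟨⟨j, b⟩, rfl⟩ := (e N).surjective b
      by_cases hij : i = j
      · subst hij
        cases a <;> cases b <;> simp [e, Fin.lt_def] at hab
        exact hc.1 i
      · have hij' : i < j := by
          rw [Fin.lt_def] at hab ⊢
          rw [Fin.ext_iff] at hij
          simp only [e, Equiv.coe_fn_mk] at hab
          split_ifs at hab <;> omega
        have h1 := hc.2 i j hij'
        have hj := hadj j
        have hi := hadj i
        have hn : (σ (e N (i, true))).val ≠ (σ (e N (j, false))).val := by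
          intro hh
          have := (e N).injective (σ.injective (Fin.ext hh))
          simp at this
        rw [Fin.lt_def] at h1 ⊢
        cases a <;> cases b <;> omega
    exact (Equiv.Perm.monotone_iff σ).1 hmono.monotone
  · simp


section part2
open Polynomial LaurentPolynomial

noncomputable def sp (x : ℂ) : ℕ → ℂ[X]
  | 0 => 2
  | 1 => X - Polynomial.C (1 + x)
  | (n + 2) => (X - Polynomial.C (1 + x)) * sp x (n + 1) - Polynomial.C x * sp x n

noncomputable def qp (x : ℂ) (n : ℕ) : ℂ[X] := if n = 0 then 1 else sp x n

noncomputable def W (x : ℂ) : ℂ[T;T⁻¹] := (1 + T 1) * (1 + LaurentPolynomial.C x * T (-1))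

noncomputable def ev (x : ℂ) : ℂ[X] →ₐ[ℂ] ℂ[T;T⁻¹] := Polynomial.aeval (W x)

lemma TT (m n : ℤ) : (T m : ℂ[T;T⁻¹]) * T n = T (m + n) := (T_add m n).symm

lemma ev_C (x a : ℂ) : ev x (Polynomial.C a) = LaurentPolynomial.C a := by
  simp [ev]

lemma T1m : (T 1 : ℂ[T;T⁻¹]) * T (-1) = 1 := by rw [TT]; simp

lemma Tn1 (n : ℕ) : (T ((n : ℤ) + 1) : ℂ[T;T⁻¹]) = T 1 * T n := by rw [TT]; congr 1; ring
lemma Tm1 (n : ℕ) : (T (-((n : ℤ) + 1)) : ℂ[T;T⁻¹]) = T (-1) * T (-n) := by rw [TT]; congr 1; ring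

lemma ev_lin (x : ℂ) : ev x (X - Polynomial.C (1 + x)) = T 1 + LaurentPolynomial.C x * T (-1) := by
  rw [map_sub, ev_C, ev, aeval_X, W, map_add, map_one]
  linear_combination LaurentPolynomial.C x * T1m

lemma ev_sp (x : ℂ) (n : ℕ) :
    ev x (sp x n) = T n + LaurentPolynomial.C x ^ n * T (-n) ∧
    ev x (sp x (n + 1)) = T (n + 1) + LaurentPolynomial.C x ^ (n + 1) * T (-(n + 1)) := by
  induction n with
  | zero =>
    constructor
    · simp [sp, map_ofNat]; norm_num
    · simp only [sp]; rw [ev_lin]; simp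
  | succ n ih =>
    obtain ⟨h1, h2⟩ := ih
    refine ⟨by push_cast; exact h2, ?_⟩
    rw [sp, map_sub, map_mul, map_mul, ev_lin, ev_C, h1, h2]
    push_cast
    have a1 : (T ((n : ℤ) + 1 + 1) : ℂ[T;T⁻¹]) = T 1 * (T 1 * T n) := by
      rw [TT, TT]; congr 1; ring
    have a2 : (T (-((n : ℤ) + 1 + 1)) : ℂ[T;T⁻¹]) = T (-1) * (T (-1) * T (-n)) := by
      rw [TT, TT]; congr 1; ring
    rw [a1, a2, Tn1, Tm1]
    linear_combination (LaurentPolynomial.C x * T n + LaurentPolynomial.C x ^ (n+1) * T (-n)) * T1m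

lemma ev_dsp (x : ℂ) (n : ℕ) :
    ev x (derivative (sp x n)) * (T 1 - LaurentPolynomial.C x * T (-1)) =
      (n : ℂ[T;T⁻¹]) * (T n - LaurentPolynomial.C x ^ n * T (-n)) ∧
    ev x (derivative (sp x (n + 1))) * (T 1 - LaurentPolynomial.C x * T (-1)) =
      ((n : ℂ[T;T⁻¹]) + 1) * (T (n + 1) - LaurentPolynomial.C x ^ (n + 1) * T (-(n + 1))) := by
  induction n with
  | zero =>
    constructor
    · simp [sp]
    · simp [sp]
  | succ n ih =>
    obtain ⟨h1, h2⟩ := ih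
    refine ⟨by push_cast; exact h2, ?_⟩
    have hd : derivative (sp x (n + 1 + 1)) = sp x (n + 1) +
        (X - Polynomial.C (1 + x)) * derivative (sp x (n + 1)) -
        Polynomial.C x * derivative (sp x n) := by
      rw [sp]; simp [derivative_mul]
    rw [hd, map_sub, map_add, map_mul, map_mul, ev_lin, ev_C, (ev_sp x n).2]
    have a1 : (T ((n : ℤ) + 1 + 1) : ℂ[T;T⁻¹]) = T 1 * (T 1 * T n) := by
      rw [TT, TT]; congr 1; ring
    have a2 : (T (-((n : ℤ) + 1 + 1)) : ℂ[T;T⁻¹]) = T (-1) * (T (-1) * T (-n)) := by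
      rw [TT, TT]; congr 1; ring
    push_cast
    rw [a1, a2]
    rw [Tn1, Tm1] at *
    linear_combination (T 1 + LaurentPolynomial.C x * T (-1)) * h2 - LaurentPolynomial.C x * h1
     + (n * (LaurentPolynomial.C x * T n - LaurentPolynomial.C x ^ (n+1) * T (-n))) * T1m

noncomputable def ct : ℂ[T;T⁻¹] →ₗ[ℂ] ℂ where
  toFun f := f.coeff 0
  map_add' f g := by simp
  map_smul' a f := by simp

lemma ct_CT (a : ℂ) (n : ℤ) : ct (LaurentPolynomial.C a * T n) = if n = 0 then a else 0 := by
  have : ct (LaurentPolynomial.C a * T n) = (LaurentPolynomial.C a * T n).coeff 0 := rfl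
  rw [this, ← single_eq_C_mul_T, AddMonoidAlgebra.coeff_single, Finsupp.single_apply]

noncomputable def LL (x : ℂ) : ℂ[X] →ₗ[ℂ] ℂ :=
  ct ∘ₗ (LinearMap.mulRight ℂ (LaurentPolynomial.C x - T 2)) ∘ₗ (ev x).toLinearMap

lemma LL_apply (x : ℂ) (f : ℂ[X]) : LL x f = ct (ev x f * (LaurentPolynomial.C x - T 2)) := rfl

noncomputable def br (x : ℂ) : ℂ[X] →ₗ[ℂ] ℂ[X] →ₗ[ℂ] ℂ :=
  LinearMap.mk₂ ℂ (fun f g => LL x (f * derivative g - derivative f * g))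
    (by intro f f' g; rw [← map_add]; congr 1; simp; ring)
    (by intro a f g; rw [← map_smul]; congr 1; simp [smul_sub])
    (by intro f g g'; rw [← map_add]; congr 1; simp; ring)
    (by intro a f g; rw [← map_smul]; congr 1; simp [smul_sub])

lemma br_apply (x : ℂ) (f g : ℂ[X]) : br x f g = LL x (f * derivative g - derivative f * g) := rfl

lemma fac (x : ℂ) : LaurentPolynomial.C x - T 2 = - T 1 * (T 1 - LaurentPolynomial.C x * T (-1)) := by
  have : (T 2 : ℂ[T;T⁻¹]) = T 1 * T 1 := by rw [TT]; rfl
  rw [this]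
  linear_combination -LaurentPolynomial.C x * T1m

lemma br_q (x : ℂ) (i j : ℕ) (hij : i < j) :
    br x (qp x i) (qp x j) = if i + 1 = j then (2 * (i : ℂ) + 1) * x ^ (i + 1) else 0 := by
  rw [br_apply, LL_apply, fac]
  have hj : qp x j = sp x j := by rw [qp, if_neg (by omega)]
  rw [hj]
  have dj := (ev_dsp x j).1
  have sj := (ev_sp x j).1
  by_cases hi : i = 0
  · subst hi
    simp only [qp, if_true, derivative_one, zero_mul, sub_zero, one_mul]
    have : ev x (derivative (sp x j)) * (-T 1 * (T 1 - LaurentPolynomial.C x * T (-1))) =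
        LaurentPolynomial.C (-(j : ℂ)) * T (j + 1) + LaurentPolynomial.C (j * x ^ j) * T (1 - j) := by
      have e1 : (T ((j : ℤ) + 1) : ℂ[T;T⁻¹]) = T 1 * T j := Tn1 j
      have e2 : (T (1 - (j : ℤ)) : ℂ[T;T⁻¹]) = T 1 * T (-j) := by rw [TT]; congr 1
      rw [e1, e2]
      simp only [map_neg, map_mul, map_natCast, map_pow]
      linear_combination - T 1 * dj
    rw [this, map_add, ct_CT, ct_CT, if_neg (by omega)]
    by_cases h1 : j = 1
    · subst h1; simp
    · rw [if_neg (by omega), if_neg (by omega)]; simp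
  · have hi' : qp x i = sp x i := by rw [qp, if_neg hi]
    rw [hi']
    have di := (ev_dsp x i).1
    have si := (ev_sp x i).1
    have : ev x (sp x i * derivative (sp x j) - derivative (sp x i) * sp x j) *
        (-T 1 * (T 1 - LaurentPolynomial.C x * T (-1))) =
        LaurentPolynomial.C ((i : ℂ) - j) * T (i + j + 1) +
        LaurentPolynomial.C (((i : ℂ) + j) * x ^ j) * T (i + 1 - j) +
        LaurentPolynomial.C (-((i : ℂ) + j) * x ^ i) * T (j + 1 - i) +
        LaurentPolynomial.C (((j : ℂ) - i) * x ^ (i + j)) * T (1 - i - j) := by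
      have e1 : (T ((i : ℤ) + j + 1) : ℂ[T;T⁻¹]) = T 1 * T i * T j := by
        rw [TT, TT]; congr 1; ring
      have e2 : (T ((i : ℤ) + 1 - j) : ℂ[T;T⁻¹]) = T 1 * T i * T (-j) := by
        rw [TT, TT]; congr 1; ring
      have e3 : (T ((j : ℤ) + 1 - i) : ℂ[T;T⁻¹]) = T 1 * T (-i) * T j := by
        rw [TT, TT]; congr 1; ring
      have e4 : (T (1 - (i : ℤ) - j) : ℂ[T;T⁻¹]) = T 1 * T (-i) * T (-j) := by
        rw [TT, TT]; congr 1
      rw [e1, e2, e3, e4]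
      simp only [map_neg, map_mul, map_natCast, map_pow, map_sub, map_add]
      rw [si, sj]
      linear_combination - T 1 * (T i + LaurentPolynomial.C x ^ i * T (-i)) * dj
        + T 1 * (T j + LaurentPolynomial.C x ^ j * T (-j)) * di
    rw [this, map_add, map_add, map_add, ct_CT, ct_CT, ct_CT, ct_CT, if_neg (by omega),
      if_neg (show ¬ ((j : ℤ) + 1 - i = 0) by omega), if_neg (show ¬ (1 - (i : ℤ) - j = 0) by omega)]
    by_cases h1 : i + 1 = j
    · subst h1; simp; left; ring
    · rw [if_neg (by omega), if_neg h1]; simp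

lemma ch (n k : ℕ) (hk : k ≤ n) : (1 / ((n + 1 : ℕ) : ℂ)) * ((n + 1).choose (k + 1)) * ((n + 1).choose k) =
    (n.choose k : ℂ) ^ 2 - (if k = 0 then 0 else (n.choose (k - 1) : ℂ)) * n.choose (k + 1) := by
  have h1 : ((n + 1 : ℕ) : ℂ) * n.choose k = (n + 1).choose (k + 1) * ((k + 1 : ℕ) : ℂ) := by
    exact_mod_cast Nat.add_one_mul_choose_eq n k
  have h2 : ((n : ℂ) + 1 - k) * ((n + 1).choose k) = (n + 1) * n.choose k := by
    have := Nat.choose_mul_succ_eq n k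
    have h : ((n + 1 - k : ℕ) : ℂ) = (n : ℂ) + 1 - k := by
      rw [Nat.cast_sub (by omega)]; push_cast; ring
    rw [← h]
    have : (n.choose k : ℂ) * ((n + 1 : ℕ) : ℂ) = (n + 1).choose k * ((n + 1 - k : ℕ) : ℂ) := by
      exact_mod_cast this
    push_cast at this
    linear_combination -this
  have h3 : ((n + 1).choose (k + 1) : ℂ) = n.choose k + n.choose (k + 1) := by
    exact_mod_cast Nat.choose_succ_succ n k
  have h4 : ((n + 1).choose k : ℂ) = (if k = 0 then 0 else (n.choose (k - 1) : ℂ)) + n.choose k := by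
    cases k with
    | zero => simp
    | succ k => simp [Nat.choose_succ_succ]
  set b := (if k = 0 then 0 else (n.choose (k - 1) : ℂ))
  have hn : ((n : ℂ) + 1) ≠ 0 := by exact_mod_cast Nat.succ_ne_zero n
  have hk1 : ((k : ℂ) + 1) ≠ 0 := by exact_mod_cast Nat.succ_ne_zero k
  have hnk : ((n : ℂ) + 1 - k) ≠ 0 := by
    have h : ((n - k + 1 : ℕ) : ℂ) = (n : ℂ) + 1 - k := by
      push_cast [Nat.cast_sub hk]; ring
    rw [← h]; exact_mod_cast Nat.succ_ne_zero (n - k)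
  push_cast at *
  rw [h3] at h1 ⊢
  rw [h4] at h2 ⊢
  have hd : (n.choose (k + 1) : ℂ) = (n - k) * n.choose k / (k + 1) := by
    rw [eq_div_iff hk1]; linear_combination -h1
  have hb : b = k * n.choose k / (n + 1 - k) := by
    rw [eq_div_iff hnk]; linear_combination h2
  rw [hd, hb]
  field_simp
  ring

lemma ct_W (x : ℂ) (n : ℕ) (m : ℕ) : ct (W x ^ n * T m) =
    ∑ a ∈ Finset.range (n + 1), (n.choose a : ℂ) * n.choose (a + m) * x ^ (a + m) := by
  have h : W x ^ n * T m = ∑ a ∈ Finset.range (n + 1), ∑ b ∈ Finset.range (n + 1),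
      LaurentPolynomial.C ((n.choose a : ℂ) * n.choose b * x ^ b) * T (a + m - b) := by
    rw [W, mul_pow, add_comm (1 : ℂ[T;T⁻¹]) (T 1), add_comm (1 : ℂ[T;T⁻¹]), add_pow, add_pow,
      Finset.sum_mul_sum, Finset.sum_mul]
    apply Finset.sum_congr rfl; intro a _
    rw [Finset.sum_mul]
    apply Finset.sum_congr rfl; intro b _
    have e1 : (T ((a : ℤ) + m - b) : ℂ[T;T⁻¹]) = T a * T m * T (-b) := by
      rw [TT, TT]; congr 1
    rw [e1, mul_pow, T_pow, T_pow]
    simp only [map_mul, map_natCast, map_pow, one_pow, mul_one, mul_neg]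
    ring
  rw [h, map_sum]
  apply Finset.sum_congr rfl; intro a _
  rw [map_sum]
  simp only [ct_CT]
  by_cases hm : a + m ∈ Finset.range (n + 1)
  · rw [Finset.sum_eq_single (a + m)]
    · simp
    · intro b _ hb; rw [if_neg (by omega)]
    · intro h; exact absurd hm h
  · rw [Finset.sum_eq_zero, Nat.choose_eq_zero_of_lt (show n < a + m by simpa using hm)]
    · simp
    · intro b hb
      rw [if_neg]
      intro h
      apply hm
      have : b = a + m := by omega
      exact this ▸ hb

lemma LL_X (x : ℂ) (n : ℕ) : LL x (X ^ n) = narayana (n + 1) x := by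
  have h0 := ct_W x n 0
  have h2 := ct_W x n 2
  have : ev x (X ^ n) * (LaurentPolynomial.C x - T 2) = x • (W x ^ n * T (0 : ℕ)) - W x ^ n * T (2 : ℕ) := by
    rw [LaurentPolynomial.smul_eq_C_mul]
    simp [ev]
    ring
  rw [LL_apply, this, map_sub, map_smul, h0, h2, narayana, if_neg (Nat.succ_ne_zero n)]
  rw [Finset.sum_range_succ' _ (n + 1)]
  simp only [Nat.add_sub_cancel, if_true, if_neg (Nat.succ_ne_zero _), mul_zero, zero_mul, add_zero]
  have h3 : ∑ k ∈ Finset.range (n + 1), 1 / ((n + 1 : ℕ) : ℂ) * ((n + 1).choose (k + 1)) * ((n + 1).choose k) * x ^ (k + 1)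
     = ∑ k ∈ Finset.range (n + 1), ((n.choose k : ℂ) ^ 2 * x ^ (k + 1) -
        (if k = 0 then 0 else (n.choose (k - 1) : ℂ)) * n.choose (k + 1) * x ^ (k + 1)) := by
    apply Finset.sum_congr rfl
    intro k hk
    rw [ch n k (by simpa [Nat.lt_succ_iff] using hk)]
    ring
  rw [h3, Finset.sum_sub_distrib, smul_eq_mul, Finset.mul_sum]
  congr 1
  · apply Finset.sum_congr rfl; intro k _; ring
  · symm
    rw [Finset.sum_range_succ']
    rw [Finset.sum_range_succ]
    simp [Nat.choose_eq_zero_of_lt]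

lemma br_X (x : ℂ) (i j : ℕ) : br x (X ^ i) (X ^ j) = ((j : ℂ) - i) * narayana (i + j) x := by
  rw [br_apply]
  by_cases h : i + j = 0
  · obtain ⟨rfl, rfl⟩ : i = 0 ∧ j = 0 := by omega
    simp
  · obtain ⟨k, hk⟩ : ∃ k, i + j = k + 1 := ⟨i + j - 1, by omega⟩
    rw [hk, ← LL_X, ← smul_eq_mul (_ : ℂ), ← (LL x).map_smul]
    congr 1
    have e1 : (X : ℂ[X]) ^ i * derivative (X ^ j) = (j : ℂ) • X ^ k := by
      rw [derivative_X_pow, Polynomial.smul_eq_C_mul]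
      cases j with
      | zero => simp
      | succ j =>
        have : k = i + j := by omega
        subst this
        simp; ring
    have e2 : derivative ((X : ℂ[X]) ^ i) * X ^ j = (i : ℂ) • X ^ k := by
      rw [derivative_X_pow, Polynomial.smul_eq_C_mul]
      cases i with
      | zero => simp
      | succ i =>
        have : k = i + j := by omega
        subst this
        simp; ring
    rw [e1, e2, sub_smul]

lemma sp_deg (x : ℂ) (n : ℕ) : ((sp x (n + 1)).Monic ∧ (sp x (n + 1)).natDegree = n + 1) ∧
    ((sp x (n + 2)).Monic ∧ (sp x (n + 2)).natDegree = n + 2) := by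
  have hl : (X - Polynomial.C (1 + x)).Monic := monic_X_sub_C _
  have step : ∀ p q : ℂ[X], ∀ d : ℕ, p.Monic → p.natDegree = d + 1 → q.natDegree ≤ d →
      ((X - Polynomial.C (1 + x)) * p - Polynomial.C x * q).Monic ∧
      ((X - Polynomial.C (1 + x)) * p - Polynomial.C x * q).natDegree = d + 2 := by
    intro p q d hp hd hq
    have hm := hl.mul hp
    have hdm : ((X - Polynomial.C (1 + x)) * p).natDegree = d + 2 := by
      rw [hl.natDegree_mul hp, natDegree_X_sub_C, hd]; ring
    have hlt : (Polynomial.C x * q).natDegree < ((X - Polynomial.C (1 + x)) * p).natDegree := by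
      have := natDegree_C_mul_le x q
      omega
    refine ⟨hm.sub_of_left (degree_lt_degree hlt), ?_⟩
    rw [natDegree_sub_eq_left_of_natDegree_lt hlt, hdm]
  induction n with
  | zero =>
    have h1 : (sp x 1).Monic ∧ (sp x 1).natDegree = 0 + 1 := by
      rw [sp]; exact ⟨hl, natDegree_X_sub_C _⟩
    refine ⟨h1, ?_⟩
    rw [sp]
    refine step _ _ 0 h1.1 h1.2 ?_
    rw [sp]
    exact (natDegree_ofNat 2).le
  | succ n ih =>
    refine ⟨ih.2, ?_⟩
    rw [sp]
    exact step _ _ (n + 1) ih.2.1 ih.2.2 ih.1.2.le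

lemma qp_deg (x : ℂ) (n : ℕ) : (qp x n).Monic ∧ (qp x n).natDegree = n := by
  cases n with
  | zero => simp [qp]
  | succ n => simpa [qp] using (sp_deg x n).1

lemma prod_odd (x : ℂ) (n : ℕ) : ∏ k ∈ Finset.range n, x ^ (2 * k + 1) = x ^ (n ^ 2) := by
  induction n with
  | zero => simp
  | succ n ih => rw [Finset.prod_range_succ, ih]; ring

lemma main (n : ℕ) (x : ℂ) :
    pfaffian (N := n) (Matrix.of fun i j : Fin (2 * n) =>
        ((j.val : ℂ) - (i.val : ℂ)) * narayana (i.val + j.val) x) =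
      x ^ (n ^ 2) * ∏ k ∈ Finset.range n, (4 * (k : ℂ) + 1) := by
  set A : Matrix (Fin (2 * n)) (Fin (2 * n)) ℂ := Matrix.of fun i j : Fin (2 * n) =>
        ((j.val : ℂ) - (i.val : ℂ)) * narayana (i.val + j.val) x with hA
  let B : Matrix (Fin (2 * n)) (Fin (2 * n)) ℂ := Matrix.of fun i j => (qp x i.val).coeff j.val
  have hskew : ∀ i j, A j i = - A i j := by
    intro i j
    simp only [hA, Matrix.of_apply]
    rw [add_comm j.val]; ring
  have hdet : B.det = 1 := by
    rw [Matrix.det_of_isLowerTriangular]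
    · apply Finset.prod_eq_one
      intro i _
      have := qp_deg x i.val
      have h := this.1
      rw [Monic, leadingCoeff, this.2] at h
      exact h
    · intro i j hij
      have hij' : i.val < j.val := hij
      change (qp x i.val).coeff j.val = 0
      apply coeff_eq_zero_of_natDegree_lt
      rw [(qp_deg x i.val).2]
      exact hij'
  rw [← pf_conj A B hskew hdet]
  have hq : ∀ i : Fin (2 * n), qp x i.val = ∑ m : Fin (2 * n), B i m • (X : ℂ[X]) ^ m.val := by
    intro i
    rw [as_sum_range' (qp x i.val) (2 * n) (by rw [(qp_deg x i.val).2]; exact i.isLt),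
      ← Fin.sum_univ_eq_sum_range (fun m => monomial m ((qp x i.val).coeff m))]
    apply Finset.sum_congr rfl
    intro m _
    rw [Polynomial.smul_eq_C_mul, C_mul_X_pow_eq_monomial]
    rfl
  have hE : ∀ i j : Fin (2 * n), (B * A * B.transpose) i j = br x (qp x i.val) (qp x j.val) := by
    intro i j
    rw [hq i, hq j]
    simp only [map_sum, LinearMap.sum_apply, map_smul, LinearMap.smul_apply, br_X,
      Matrix.mul_apply, Matrix.transpose_apply, Finset.sum_mul, smul_eq_mul, Finset.mul_sum]
    apply Finset.sum_congr rfl; intro l _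
    apply Finset.sum_congr rfl; intro k _
    simp only [hA, Matrix.of_apply]
    ring
  rw [pf_tri _ (fun i => (2 * (i : ℂ) + 1) * x ^ (i + 1))]
  · rw [Finset.prod_mul_distrib, mul_comm]
    congr 1
    · exact prod_odd x n
    · apply Finset.prod_congr rfl; intro k _; push_cast; ring
  · intro i j hij
    rw [hE, br_q x _ _ hij]

end part2

end PfN

/-- For every integer `n ≥ 0` and every complex number `x`, the Pfaffian of the
`2n × 2n` skew-symmetric matrix with entries `(j-i)·N_{i+j-2}(x)` (1-based; here
0-based, so the entry at `(i,j)` is `(j-i)·N_{i+j}(x)`) equals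
`x^{n²}·∏_{k=0}^{n-1} (4k+1)`. -/
theorem pfaffian_narayana (n : ℕ) (x : ℂ) :
    pfaffian (N := n) (Matrix.of fun i j : Fin (2 * n) =>
        ((j.val : ℂ) - (i.val : ℂ)) * narayana (i.val + j.val) x) =
      x ^ (n ^ 2) * ∏ k ∈ Finset.range n, (4 * (k : ℂ) + 1) := by
  exact PfN.main n x
end

section
/- For every integer n ≥ 0 and every complex number x, the determinant of the 2n×2n matrix whose (i,j) entry is (j−i)·N_{i+j−2}(x) for 1 ≤ i,j ≤ 2n equals x^{2n²}·(∏_{k=0}^{n−1} (4k+1))². -/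
open Polynomial in
noncomputable def nU (x : ℂ) : ℕ → ℂ[X]
  | 0 => 1
  | 1 => X - C (1 + x)
  | (n+2) => (X - C (1 + x)) * nU x (n+1) - C x * nU x n

open Polynomial in
noncomputable def nT (x : ℂ) : ℕ → ℂ[X]
  | 0 => 1
  | 1 => X - C (1 + x)
  | (n+2) => nU x (n+2) - C x * nU x n

noncomputable def nA (x : ℂ) : ℕ → ℕ → ℂ
  | 0, 0 => 1
  | 0, (_+1) => 0
  | (n+1), 0 => (1 + x) * nA x n 0 + x * nA x n 1
  | (n+1), (k+1) => nA x n k + (1 + x) * nA x n (k+1) + x * nA x n (k+2)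

def nB (n k : ℕ) : ℕ → ℂ
  | 0 => (n.choose k : ℂ)
  | (j+1) => (n.choose (j+1) : ℂ) * (n.choose (j+1+k) : ℂ) - (n.choose j : ℂ) * (n.choose (j+k+2) : ℂ)

lemma nB_zero_of_lt (n k j : ℕ) (h : n < j) : nB n k j = 0 := by
  cases j with
  | zero => omega
  | succ j =>
    simp only [nB]
    rw [Nat.choose_eq_zero_of_lt h, Nat.choose_eq_zero_of_lt (show n < j + k + 2 by omega)]
    simp

lemma nB_rec0 (n j : ℕ) :
    nB (n+1) 0 (j+1) = nB n 0 (j+1) + nB n 0 j + nB n 1 j := by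
  cases j with
  | zero => 
    simp only [nB, Nat.choose_succ_succ, Nat.choose_zero_right, zero_add, add_zero]; push_cast; ring
  | succ j => 
    simp only [nB]
    rw [show j+1+1+0 = (j+1)+1 by ring, show j+1+0+2 = (j+2)+1 by ring, show j+1+0 = j+1 by ring,
      show j+1+1 = j+2 by ring, show j+0+2=j+2 by ring, show j+1+2 = j+3 by ring,
      Nat.choose_succ_succ n (j+1), Nat.choose_succ_succ n (j+2), Nat.choose_succ_succ n j]
    simp only [Nat.succ_eq_add_one, add_assoc]; norm_num
    ring

lemma nB_rec1 (n k j : ℕ) :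
    nB (n+1) (k+1) (j+1) = nB n k (j+1) + nB n (k+1) (j+1) + nB n (k+1) j + nB n (k+2) j := by
  cases j with
  | zero => 
    simp only [nB]
    rw [show 0+1+(k+1) = (k+1)+1 by ring, show 0+(k+1)+2 = (k+2)+1 by ring, show 0+1+k=k+1 by ring,
      show 0+k+2=k+2 by ring, Nat.choose_succ_succ n (k+1), Nat.choose_succ_succ n (k+2), Nat.choose_succ_succ n 0]
    simp only [Nat.succ_eq_add_one, add_assoc, Nat.choose_zero_right]; norm_num
    ring
  | succ j => 
    simp only [nB]
    rw [show j+1+1+(k+1) = (j+k+2)+1 by ring, show j+1+(k+1)+2 = (j+k+3)+1 by ring,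
      show j+1+1+k = j+k+2 by ring, show j+1+k+2=j+k+3 by ring, show j+1+(k+1) = j+k+2 by ring,
      show j+(k+1)+2=j+k+3 by ring, show j+1+(k+2)=j+k+3 by ring, show j+(k+2)+2 = j+k+4 by ring,
      Nat.choose_succ_succ n (j+k+2), Nat.choose_succ_succ n (j+k+3), Nat.choose_succ_succ n (j+1),
      Nat.choose_succ_succ n j]
    simp only [Nat.succ_eq_add_one, add_assoc]; norm_num
    ring

lemma nA_eq (x : ℂ) (n : ℕ) : ∀ k M : ℕ, n < M →
    nA x n k = ∑ j ∈ Finset.range M, nB n k j * x ^ j := by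
  induction n with
  | zero =>
    intro k M hM
    obtain ⟨M, rfl⟩ : ∃ m, M = m + 1 := ⟨M - 1, by omega⟩
    rw [Finset.sum_range_succ', Finset.sum_eq_zero]
    · cases k <;> simp [nA, nB]
    · intro i _; rw [nB_zero_of_lt _ _ _ (by omega)]; simp
  | succ n ih =>
    intro k M hM
    obtain ⟨M, rfl⟩ : ∃ m, M = m + 1 := ⟨M - 1, by omega⟩
    have h1 : ∀ k, nA x n k = ∑ j ∈ Finset.range M, nB n k (j+1) * x ^ (j+1) + nB n k 0 := by
      intro k
      rw [ih k (M+1) (by omega), Finset.sum_range_succ']; simp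
    have h2 : ∀ k, x * nA x n k = ∑ j ∈ Finset.range M, nB n k j * x ^ (j+1) := by
      intro k
      rw [ih k M (by omega), Finset.mul_sum]
      exact Finset.sum_congr rfl fun i _ => by ring
    rw [Finset.sum_range_succ']
    cases k with
    | zero =>
      have : nA x (n+1) 0 = nA x n 0 + x * nA x n 0 + x * nA x n 1 := by simp only [nA]; ring
      rw [this, h2, h2, h1]
      simp only [nB_rec0, add_mul, Finset.sum_add_distrib]
      simp only [nB, Nat.choose_zero_right]
      ring
    | succ k =>
      have : nA x (n+1) (k+1) = nA x n k + nA x n (k+1) + x * nA x n (k+1) + x * nA x n (k+2) := by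
        simp only [nA]; ring
      rw [this, h2, h2, h1, h1]
      simp only [nB_rec1, add_mul, Finset.sum_add_distrib]
      simp only [nB, Nat.choose_succ_succ n k, Nat.succ_eq_add_one]
      push_cast
      ring

lemma nB_nar (n j : ℕ) : nB n 0 j = (1 / ((n+1 : ℕ) : ℂ)) * ((n+1).choose (j+1)) * ((n+1).choose j) := by
  have hn : ((n+1 : ℕ) : ℂ) ≠ 0 := Nat.cast_ne_zero.mpr (by omega)
  cases j with
  | zero => simp [nB]; field_simp
  | succ j =>
    simp only [nB]
    rw [show j+0+2 = (j+1)+1 by ring, show j+1+0=j+1 by ring]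
    have e1 : (n+1) * n.choose (j+1) = (n+1).choose (j+2) * (j+2) := Nat.add_one_mul_choose_eq n (j+1)
    have e2 : (n+1) * n.choose j = (n+1).choose (j+1) * (j+1) := Nat.add_one_mul_choose_eq n j
    have p1 : (n+1).choose (j+2) = n.choose (j+1) + n.choose (j+2) := Nat.choose_succ_succ n (j+1)
    have p2 : (n+1).choose (j+1) = n.choose j + n.choose (j+1) := Nat.choose_succ_succ n j
    have p1' : ((n+1).choose (j+2) : ℂ) = n.choose (j+1) + n.choose (j+2) := by exact_mod_cast p1
    have p2' : ((n+1).choose (j+1) : ℂ) = n.choose j + n.choose (j+1) := by exact_mod_cast p2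
    have e1' : ((n:ℂ)+1) * n.choose (j+1) = (n+1).choose (j+2) * (j+2) := by exact_mod_cast e1
    have e2' : ((n:ℂ)+1) * n.choose j = (n+1).choose (j+1) * (j+1) := by exact_mod_cast e2
    rw [show j+1+1=j+2 by ring]
    rw [p1', p2'] at *
    push_cast at hn ⊢
    field_simp
    generalize ((n.choose j : ℕ) : ℂ) = a at *
    generalize ((n.choose (j+1) : ℕ) : ℂ) = b at *
    generalize ((n.choose (j+2) : ℕ) : ℂ) = c at *
    linear_combination (a + b) * e1' - (b + c) * e2'

lemma nar_eq (x : ℂ) (n : ℕ) : narayana (n+1) x = x * nA x n 0 := by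
  rw [nA_eq x n 0 (n+1) (by omega), narayana, if_neg (by omega), Finset.sum_range_succ', Finset.mul_sum]
  simp only [if_true, mul_zero, zero_mul, add_zero]
  refine Finset.sum_congr rfl fun j _ => ?_
  rw [nB_nar, if_neg (by omega), Nat.add_sub_cancel]
  ring

lemma nA_lt (x : ℂ) (n : ℕ) : ∀ k, n < k → nA x n k = 0 := by
  induction n with
  | zero => intro k hk; cases k with
    | zero => omega
    | succ k => simp [nA]
  | succ n ih => intro k hk; cases k with
    | zero => omega
    | succ k => simp [nA, ih k (by omega), ih (k+1) (by omega), ih (k+2) (by omega)]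

lemma nA_diag (x : ℂ) (n : ℕ) : nA x n n = 1 := by
  induction n with
  | zero => simp [nA]
  | succ n ih => simp [nA, ih, nA_lt x n (n+1) (by omega), nA_lt x n (n+2) (by omega)]

/-- the functional -/
noncomputable def nPsi (x : ℂ) : Polynomial ℂ →ₗ[ℂ] ℂ :=
  Polynomial.lsum fun n => (LinearMap.id : ℂ →ₗ[ℂ] ℂ).smulRight (nA x n 0)

open Polynomial

lemma nPsi_X (x : ℂ) (n : ℕ) : nPsi x (X ^ n) = nA x n 0 := by
  rw [← Polynomial.monomial_one_right_eq_X_pow]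
  simp [nPsi, Polynomial.lsum_apply]

lemma nPsi_C (x a : ℂ) (p : ℂ[X]) : nPsi x (C a * p) = a * nPsi x p := by
  rw [Polynomial.C_mul', map_smul, smul_eq_mul]

lemma nPsi_U (x : ℂ) (k : ℕ) : (∀ n, nPsi x (nU x k * X ^ n) = x ^ k * nA x n k) ∧
    (∀ n, nPsi x (nU x (k+1) * X ^ n) = x ^ (k+1) * nA x n (k+1)) := by
  induction k with
  | zero =>
    constructor
    · intro n; simp [nU, nPsi_X]
    · intro n
      have : nU x (0+1) * X ^ n = X ^ (n+1) - C (1+x) * X ^ n := by simp only [nU]; ring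
      rw [this, map_sub, nPsi_C, nPsi_X, nPsi_X]; simp only [nA]; ring
  | succ k ih =>
    refine ⟨ih.2, fun n => ?_⟩
    have : nU x (k+1+1) * X ^ n = nU x (k+1) * X ^ (n+1) - C (1+x) * (nU x (k+1) * X ^ n)
      - C x * (nU x k * X ^ n) := by simp only [nU]; ring
    rw [this, map_sub, map_sub, nPsi_C, nPsi_C, ih.1, ih.2, ih.2]
    simp only [nA]; ring

lemma nPsi_U_mul (x : ℂ) (k : ℕ) (p : ℂ[X]) (hp : p.natDegree ≤ k) :
    nPsi x (nU x k * p) = x ^ k * p.coeff k := by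
  conv_lhs => rw [p.as_sum_range_C_mul_X_pow' (n := k+1) (by omega)]
  rw [Finset.mul_sum, map_sum, Finset.sum_range_succ, Finset.sum_eq_zero]
  · rw [mul_left_comm, nPsi_C, (nPsi_U x k).1, nA_diag]; ring
  · intro i hi
    rw [mul_left_comm, nPsi_C, (nPsi_U x k).1, nA_lt x i k (by simpa using hi)]; ring

lemma nU_deg (x : ℂ) (k : ℕ) : ((nU x k).natDegree ≤ k ∧ (nU x k).coeff k = 1) ∧
    ((nU x (k+1)).natDegree ≤ k+1 ∧ (nU x (k+1)).coeff (k+1) = 1) := by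
  induction k with
  | zero => 
    simp only [nU]
    refine ⟨by simp, by compute_degree, by simp [coeff_X, coeff_one, coeff_C]⟩
  | succ k ih =>
    refine ⟨ih.2, ?_⟩
    obtain ⟨⟨h1, h2⟩, h3, h4⟩ := ih
    have e : nU x (k+1+1) = (X - C (1+x)) * nU x (k+1) - C x * nU x k := rfl
    constructor
    · rw [e]
      refine (natDegree_sub_le _ _).trans (max_le ?_ ?_)
      · refine natDegree_mul_le.trans ?_
        have : (X - C (1+x)).natDegree ≤ 1 := (natDegree_X_sub_C _).le
        omega
      · exact (natDegree_C_mul_le _ _).trans (by omega)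
    · rw [e, sub_mul, coeff_sub, coeff_sub, coeff_X_mul, coeff_C_mul, coeff_C_mul, h4,
        coeff_eq_zero_of_natDegree_lt (show (nU x (k+1)).natDegree < k+1+1 by omega),
        coeff_eq_zero_of_natDegree_lt (show (nU x k).natDegree < k+1+1 by omega)]
      ring

lemma nT_deg (x : ℂ) (k : ℕ) : (nT x k).natDegree ≤ k ∧ (nT x k).coeff k = 1 := by
  match k with
  | 0 => exact (nU_deg x 0).1
  | 1 => exact (nU_deg x 0).2
  | k+2 =>
    have h1 := (nU_deg x (k+2)).1
    have h2 := (nU_deg x k).1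
    have e : nT x (k+2) = nU x (k+2) - C x * nU x k := rfl
    constructor
    · rw [e]
      exact (natDegree_sub_le _ _).trans (max_le h1.1 ((natDegree_C_mul_le _ _).trans (by omega)))
    · rw [e, coeff_sub, coeff_C_mul, h1.2, 
        coeff_eq_zero_of_natDegree_lt (show (nU x k).natDegree < k+2 by omega)]
      ring

lemma nT_rec (x : ℂ) (n : ℕ) : nT x (n+3) = (X - C (1+x)) * nT x (n+2) - C x * nT x (n+1) := by
  cases n with
  | zero => simp only [nT, nU]; ring
  | succ n => simp only [nT, nU]; ring

lemma nT_deriv (x : ℂ) (n : ℕ) : derivative (nT x (n+1)) = ((n+1 : ℕ) : ℂ[X]) * nU x n ∧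
    derivative (nT x (n+2)) = ((n+2 : ℕ) : ℂ[X]) * nU x (n+1) := by
  induction n with
  | zero => 
    constructor
    · simp [nT, nU]
    · simp [nT, nU]; ring
  | succ n ih =>
    refine ⟨ih.2, ?_⟩
    rw [show n+1+2 = n+3 by ring, nT_rec, derivative_sub, derivative_mul, derivative_mul, ih.1, ih.2]
    simp only [nT, nU, derivative_sub, derivative_X, derivative_C]
    push_cast
    ring

noncomputable def nForm (x : ℂ) (f g : ℂ[X]) : ℂ :=
  x * nPsi x (f * derivative g - derivative f * g)

lemma nForm_skew (x : ℂ) (f g : ℂ[X]) : nForm x f g = - nForm x g f := by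
  unfold nForm
  rw [← mul_neg, ← map_neg]; congr 2; ring

lemma nForm_X (x : ℂ) (i j : ℕ) :
    nForm x (X ^ i) (X ^ j) = ((j : ℂ) - (i : ℂ)) * narayana (i + j) x := by
  unfold nForm
  rcases Nat.eq_zero_or_pos (i + j) with h | h
  · obtain ⟨rfl, rfl⟩ : i = 0 ∧ j = 0 := by omega
    simp
  · obtain ⟨m, hm⟩ : ∃ m, i + j = m + 1 := ⟨i + j - 1, by omega⟩
    have : (X ^ i * derivative (X ^ j) - derivative (X ^ i) * X ^ j : ℂ[X]) =
        C ((j : ℂ) - i) * X ^ m := by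
      rw [derivative_X_pow, derivative_X_pow]
      have h1 : (X ^ i * (C (j:ℂ) * X ^ (j-1)) : ℂ[X]) = C (j:ℂ) * X ^ m := by
        cases j with
        | zero => simp
        | succ j => rw [mul_left_comm, ← pow_add]; congr 2; omega
      have h2 : (C (i:ℂ) * X ^ (i-1) * X ^ j : ℂ[X]) = C (i:ℂ) * X ^ m := by
        cases i with
        | zero => simp
        | succ i => rw [mul_assoc, ← pow_add]; congr 2; omega
      rw [h1, h2, C_sub]; ring
    rw [this, nPsi_C, nPsi_X, hm, nar_eq]; ring

lemma nForm_T (x : ℂ) (m n : ℕ) (h : m < n) :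
    nForm x (nT x m) (nT x n) = if n = m + 1 then (2 * (m:ℂ) + 1) * x ^ (m+1) else 0 := by
  obtain ⟨n, rfl⟩ : ∃ k, n = k + 1 := ⟨n - 1, by omega⟩
  have hT := nT_deg x m
  have hc : (nT x m).coeff n = if n = m then 1 else 0 := by
    split_ifs with h'
    · rw [h', hT.2]
    · exact coeff_eq_zero_of_natDegree_lt (by omega)
  have h1 : nPsi x (nT x m * derivative (nT x (n+1))) =
      if n = m then ((m:ℂ)+1) * x ^ m else 0 := by
    have : nT x m * derivative (nT x (n+1)) = C ((n+1 : ℕ) : ℂ) * (nU x n * nT x m) := by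
      rw [(nT_deriv x n).1, map_natCast]; ring
    rw [this, nPsi_C, nPsi_U_mul x n _ (by omega), hc]
    split_ifs with h'
    · subst h'; push_cast; ring
    · ring
  have h2 : nPsi x (derivative (nT x m) * nT x (n+1)) =
      if n = m then - (m:ℂ) * x ^ m else 0 := by
    cases m with
    | zero => simp [nT]
    | succ m =>
      obtain ⟨n, rfl⟩ : ∃ k, n = k + 1 := ⟨n - 1, by omega⟩
      have hU := (nU_deg x m).1
      have : derivative (nT x (m+1)) * nT x (n+1+1) = C ((m+1 : ℕ) : ℂ) * (nU x (n+2) * nU x m)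
          - C (((m+1 : ℕ) : ℂ) * x) * (nU x n * nU x m) := by
        rw [(nT_deriv x m).1, C_mul, map_natCast]; simp only [nT]; ring
      rw [this, map_sub, nPsi_C, nPsi_C, nPsi_U_mul x _ _ (by omega), nPsi_U_mul x _ _ (by omega),
        coeff_eq_zero_of_natDegree_lt (show (nU x m).natDegree < n+2 by omega)]
      split_ifs with h'
      · obtain rfl : n = m := by omega
        rw [hU.2]; push_cast; ring
      · rw [coeff_eq_zero_of_natDegree_lt (by omega)]; ring
  unfold nForm
  rw [map_sub, h1, h2]
  by_cases h' : n = m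
  · subst h'; simp; ring
  · simp [h']

lemma nForm_sum (x : ℂ) (N : ℕ) (f g : ℂ[X]) (hf : f.natDegree < N) (hg : g.natDegree < N) :
    nForm x f g = ∑ i : Fin N, ∑ j : Fin N, f.coeff i * nForm x (X ^ (i:ℕ)) (X ^ (j:ℕ)) * g.coeff j := by
  rw [Fin.sum_univ_eq_sum_range (fun i => ∑ j : Fin N, f.coeff i * nForm x (X ^ i) (X ^ (j:ℕ)) * g.coeff j)]
  have : ∀ i, ∑ j : Fin N, f.coeff i * nForm x (X ^ i) (X ^ (j:ℕ)) * g.coeff j =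
      ∑ j ∈ Finset.range N, f.coeff i * nForm x (X ^ i) (X ^ j) * g.coeff j := fun i =>
    Fin.sum_univ_eq_sum_range (fun j => f.coeff i * nForm x (X ^ i) (X ^ j) * g.coeff j) N
  simp only [this]
  conv_lhs => rw [f.as_sum_range_C_mul_X_pow' hf, g.as_sum_range_C_mul_X_pow' hg]
  unfold nForm
  rw [derivative_sum, derivative_sum, Finset.sum_mul_sum, Finset.sum_mul_sum,
    ← Finset.sum_sub_distrib, map_sum, Finset.mul_sum]
  refine Finset.sum_congr rfl fun i _ => ?_
  rw [← Finset.sum_sub_distrib, map_sum, Finset.mul_sum]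
  refine Finset.sum_congr rfl fun j _ => ?_
  have : C (f.coeff i) * X ^ i * derivative (C (g.coeff j) * X ^ j) -
      derivative (C (f.coeff i) * X ^ i) * (C (g.coeff j) * X ^ j) =
      C (f.coeff i) * (C (g.coeff j) * (X ^ i * derivative (X ^ j) - derivative (X ^ i) * X ^ j)) := by
    rw [derivative_C_mul, derivative_C_mul]; ring
  rw [this, nPsi_C, nPsi_C]; ring

def nTri (b : ℕ → ℂ) (N : ℕ) : Matrix (Fin N) (Fin N) ℂ := fun i j =>
    if j.val = i.val + 1 then b i.val else if i.val = j.val + 1 then - b j.val else 0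

lemma nTri_succ (b : ℕ → ℂ) (N : ℕ) :
    (nTri b (N+1+1)).det = b 0 ^ 2 * (nTri (fun i => b (i+2)) N).det := by
  have hs : ∀ j : Fin N, (Fin.succAbove (1 : Fin (N+1+1)) j.succ) = j.succ.succ := by
    intro j
    rw [← Fin.succ_zero_eq_one, Fin.succ_succAbove_succ]; simp
  have hs0 : (Fin.succAbove (1 : Fin (N+1+1)) 0) = 0 := by
    rw [← Fin.succ_zero_eq_one, Fin.succ_succAbove_zero]
  rw [Matrix.det_succ_row_zero, Finset.sum_eq_single (1 : Fin (N+1+1))]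
  · rw [Matrix.det_succ_column_zero, Finset.sum_eq_single (0 : Fin (N+1))]
    · have e : ((nTri b (N+1+1)).submatrix
            Fin.succ (Fin.succAbove 1)).submatrix (Fin.succAbove 0) Fin.succ =
            nTri (fun i => b (i+2)) N := by
        ext i j
        simp only [Matrix.submatrix_apply, hs, nTri, Fin.zero_succAbove, Fin.val_succ]
        simp [add_assoc]
      rw [e]
      simp [nTri, hs0]
      ring
    · intro i _ hi
      have h1 : i.val ≠ 0 := fun h => hi (Fin.ext (by simpa using h))
      simp [nTri, hs0, h1]
    · simp
  · intro j _ hj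
    have h1 : j.val ≠ 1 := fun h => hj (Fin.ext (by simpa using h))
    simp [nTri, h1]
  · simp

lemma det_tri (n : ℕ) : ∀ b : ℕ → ℂ, (nTri b (2 * n)).det =
    ∏ k ∈ Finset.range n, (b (2 * k)) ^ 2 := by
  induction n with
  | zero => intro b; simp
  | succ n ih =>
    intro b
    rw [Finset.prod_range_succ']
    have := ih (fun i => b (i+2))
    simp only [show ∀ k, 2 * k + 2 = 2 * (k+1) from fun k => by ring] at this
    rw [← this]
    exact (nTri_succ b (2 * n)).trans (mul_comm _ _)

/-- For every integer `n ≥ 0` and every complex number `x`, the determinant of the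
`2n × 2n` skew-symmetric matrix with entries `(j-i)·N_{i+j-2}(x)` (1-based; here
0-based, so the entry at `(i,j)` is `(j-i)·N_{i+j}(x)`) equals
`x^{2n²}·(∏_{k=0}^{n-1} (4k+1))²`. -/
theorem det_narayana (n : ℕ) (x : ℂ) :
    (Matrix.of fun i j : Fin (2 * n) =>
        ((j.val : ℂ) - (i.val : ℂ)) * narayana (i.val + j.val) x).det =
      x ^ (2 * n ^ 2) * (∏ k ∈ Finset.range n, (4 * (k : ℂ) + 1)) ^ 2 := by
  set A := (Matrix.of fun i j : Fin (2 * n) =>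
        ((j.val : ℂ) - (i.val : ℂ)) * narayana (i.val + j.val) x) with hA
  let P : Matrix (Fin (2*n)) (Fin (2*n)) ℂ := Matrix.of fun i j => (nT x i).coeff j
  have hP : P.det = 1 := by
    rw [Matrix.det_of_isLowerTriangular P]
    · exact Finset.prod_eq_one fun i _ => (nT_deg x i).2
    · intro i j hij
      have : i.val < j.val := by simpa using hij
      exact coeff_eq_zero_of_natDegree_lt ((nT_deg x i).1.trans_lt this)
  have hB : P * A * P.transpose = nTri (fun m : ℕ => (2 * (m:ℂ) + 1) * x ^ (m+1)) (2 * n) := by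
    ext i j
    have : (P * A * P.transpose) i j = nForm x (nT x i) (nT x j) := by
      rw [nForm_sum x (2*n) _ _ ((nT_deg x i).1.trans_lt i.2) ((nT_deg x j).1.trans_lt j.2)]
      simp only [Matrix.mul_apply, Finset.sum_mul, Matrix.transpose_apply, nForm_X]
      rw [Finset.sum_comm]
      rfl
    rw [this]; unfold nTri
    rcases lt_trichotomy i.val j.val with h | h | h
    · rw [nForm_T x _ _ h]
      split_ifs <;> first | rfl | omega
    · rw [h, if_neg (by omega), if_neg (by omega)]
      unfold nForm
      rw [mul_comm (nT x j), sub_self]; simp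
    · rw [nForm_skew, nForm_T x _ _ h]
      split_ifs <;> first | rfl | omega | simp
  have h1 : (P * A * P.transpose).det = A.det := by
    rw [Matrix.det_mul, Matrix.det_mul, Matrix.det_transpose, hP]; ring
  rw [← h1, hB, det_tri]
  clear * -
  induction n with
  | zero => simp
  | succ n ih =>
    rw [Finset.prod_range_succ, ih, Finset.prod_range_succ]
    push_cast
    ring
end
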